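/- Let α ∈ (0, π/4) and let γ be a time optimal trajectory of (Σ)_S on [a,b] with γ(a) = (0,0,1) (the north pole). Then γ meets the equator at most once: the set {t ∈ [a,b] : γ(t)₃ = 0} contains at most one element. -/

import Mathlib

open Real MeasureTheory intervalIntegral

/-- The drift vector field on the sphere: `F_S(y) = cos α·(−y₂, y₁, 0)`. -/
noncomputable def FS (α : ℝ) (y : Fin 3 → ℝ) : Fin 3 → ℝ :=
  ![Real.cos α * (-(y 1)), Real.cos α * y 0, 0]

/-- The controlled vector field on the sphere: `G_S(y) = sin α·(0, −y₃, y₂)`. -/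
noncomputable def GS (α : ℝ) (y : Fin 3 → ℝ) : Fin 3 → ℝ :=
  ![0, Real.sin α * (-(y 2)), Real.sin α * y 1]

/-- An admissible pair for `(Σ)_S` on `[a,b]`: a measurable control `u : [a,b] → [-1,1]`
together with an absolutely continuous curve `γ : [a,b] → S²` solving
`γ' = F_S(γ) + u·G_S(γ)` a.e. (expressed in integral form, componentwise). -/
structure AdmissiblePairS (α a b : ℝ) (γ : ℝ → Fin 3 → ℝ) (u : ℝ → ℝ) : Prop where
  hab : a ≤ b
  humeas : Measurable u
  hubound : ∀ t ∈ Set.Icc a b, |u t| ≤ 1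
  hsph : ∀ t ∈ Set.Icc a b, (γ t 0) ^ 2 + (γ t 1) ^ 2 + (γ t 2) ^ 2 = 1
  hcont : ContinuousOn γ (Set.Icc a b)
  hode : ∀ t ∈ Set.Icc a b, ∀ i,
    γ t i = γ a i + ∫ s in a..t, (FS α (γ s) i + u s * GS α (γ s) i)

/-- Time optimality for `(Σ)_S`. -/
def TimeOptimalS (α a b : ℝ) (γ : ℝ → Fin 3 → ℝ) (u : ℝ → ℝ) : Prop :=
  AdmissiblePairS α a b γ u ∧
  ∀ a' b' γ' u', AdmissiblePairS α a' b' γ' u' →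
    γ' a' = γ a → γ' b' = γ b → b - a ≤ b' - a'

/-- `t` is a switching time of the control `u : [a,b] → [-1,1]`. -/
def IsSwitching (a b : ℝ) (u : ℝ → ℝ) (t : ℝ) : Prop :=
  t ∈ Set.Icc a b ∧ ∀ ε > 0, ¬ ∃ c : ℝ, (c = 1 ∨ c = -1) ∧
    ∀ᵐ s ∂(volume.restrict (Set.Ioo (t - ε) (t + ε) ∩ Set.Icc a b)), u s = c

/-! The reflection `z ↦ -z` and the half turn about the vertical axis are symmetries of the system,
both changing the sign of `u`, and the reflection `y ↦ -y` reverses time.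

Let an optimal trajectory `γ` from the north pole meet the equator for the first time at `t₁`, and
again later. By the half turn, `γ t₁` has negative second coordinate or is `(1, 0, 0)`. From the
last time before `t₁` at which `γ` has second coordinate zero, following `u = 1` up to the equator,
and then the equator itself with `u = 0` to `γ t₁`, takes no longer than `γ`. So this replacement
is optimal as well. Its last bang arc can be varied: setting `u = 1` slightly before the last time
preceding which `u` is not almost everywhere `1` moves the end point forward along the equator, to
first order. The continuation past this point (the run along the equator or, if there is none, `γ`
after `t₁`, reflected where it is below the equator) is then met ahead of time by the prolonged
varied arc, which contradicts optimality.

At `(1, 0, 0)` the bang arc is tangent to the equator. There the comparison is with bang arcs from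
nearby points with positive second coordinate, which regain the equator ahead of the run along
it. -/

section

open Set

/-! ### Indefinite integrals and one-variable calculus -/

section Calculus

variable {E F : Type*} [NormedAddCommGroup E] [NormedSpace ℝ E]
  [NormedAddCommGroup F] [NormedSpace ℝ F] {a b : ℝ}

/-- `f` is absolutely continuous on `[a, b]` with almost everywhere derivative `g`, encoded as:
`g` is integrable and `f` is its indefinite integral from `a`. -/
structure IsPrimitiveOn (f g : ℝ → E) (a b : ℝ) : Prop where
  le : a ≤ b
  intervalIntegrable : IntervalIntegrable g volume a b
  eq_integral : ∀ t ∈ Icc a b, f t = f a + ∫ r in a..t, g r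

namespace IsPrimitiveOn

variable {f g f' g' : ℝ → E}

lemma intervalIntegrable_of_mem (h : IsPrimitiveOn f g a b) {t t' : ℝ} (ht : t ∈ Icc a b)
    (ht' : t' ∈ Icc a b) : IntervalIntegrable g volume t t' :=
  h.intervalIntegrable.mono_set <| uIcc_subset_uIcc (Icc_subset_uIcc ht) (Icc_subset_uIcc ht')

lemma sub_eq_integral (h : IsPrimitiveOn f g a b) {t t' : ℝ} (ht : t ∈ Icc a b)
    (ht' : t' ∈ Icc a b) : f t' - f t = ∫ r in t..t', g r := by
  have ha : a ∈ Icc a b := left_mem_Icc.2 h.le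
  rw [h.eq_integral t ht, h.eq_integral t' ht', add_sub_add_left_eq_sub,
    integral_interval_sub_left (h.intervalIntegrable_of_mem ha ht')
      (h.intervalIntegrable_of_mem ha ht)]

lemma continuousOn (h : IsPrimitiveOn f g a b) : ContinuousOn f (Icc a b) := by
  have hprim := continuousOn_primitive_interval' h.intervalIntegrable left_mem_uIcc
  rw [uIcc_of_le h.le] at hprim
  exact (continuousOn_const.add hprim).congr h.eq_integral

lemma mono (h : IsPrimitiveOn f g a b) {a' b' : ℝ} (ha : a ≤ a') (hab : a' ≤ b') (hb : b' ≤ b) :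
    IsPrimitiveOn f g a' b' where
  le := hab
  intervalIntegrable := h.intervalIntegrable_of_mem ⟨ha, hab.trans hb⟩ ⟨ha.trans hab, hb⟩
  eq_integral t ht := by
    rw [← h.sub_eq_integral ⟨ha, hab.trans hb⟩ ⟨ha.trans ht.1, ht.2.trans hb⟩, add_sub_cancel]

lemma congr (h : IsPrimitiveOn f g a b) (hf : EqOn f' f (Icc a b)) (hg : EqOn g' g (Ioo a b)) :
    IsPrimitiveOn f' g' a b where
  le := h.le
  intervalIntegrable := h.intervalIntegrable.congr_uIoo (by rw [uIoo_of_le h.le]; exact hg.symm)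
  eq_integral t ht := by
    rw [hf ht, hf (left_mem_Icc.2 h.le), h.eq_integral t ht,
      integral_congr_Ioo_of_le ht.1 (hg.mono (Ioo_subset_Ioo_right ht.2))]

lemma trans {c : ℝ} (h : IsPrimitiveOn f g a b) (h' : IsPrimitiveOn f g b c) :
    IsPrimitiveOn f g a c where
  le := h.le.trans h'.le
  intervalIntegrable := h.intervalIntegrable.trans h'.intervalIntegrable
  eq_integral t ht := by
    rcases le_total t b with htb | htb
    · exact h.eq_integral t ⟨ht.1, htb⟩
    · rw [h'.eq_integral t ⟨htb, ht.2⟩, h.eq_integral b (right_mem_Icc.2 h.le), add_assoc,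
        integral_add_adjacent_intervals h.intervalIntegrable
          (h'.intervalIntegrable_of_mem (left_mem_Icc.2 h'.le) ⟨htb, ht.2⟩)]

lemma comp_add_right (h : IsPrimitiveOn f g a b) (d : ℝ) :
    IsPrimitiveOn (fun t ↦ f (t + d)) (fun t ↦ g (t + d)) (a - d) (b - d) where
  le := sub_le_sub_right h.le d
  intervalIntegrable := h.intervalIntegrable.comp_add_right d
  eq_integral t ht := by
    rw [integral_comp_add_right, sub_add_cancel]
    exact h.eq_integral _ ⟨by linarith [ht.1], by linarith [ht.2]⟩

lemma comp_sub_left (h : IsPrimitiveOn f g a b) (d : ℝ) :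
    IsPrimitiveOn (fun t ↦ f (d - t)) (fun t ↦ -g (d - t)) (d - b) (d - a) where
  le := sub_le_sub_left h.le d
  intervalIntegrable := (h.intervalIntegrable.comp_sub_left d).symm.neg
  eq_integral t ht := by
    have htd : d - t ∈ Icc a b := ⟨by linarith [ht.2], by linarith [ht.1]⟩
    rw [intervalIntegral.integral_neg, integral_comp_sub_left, sub_sub_cancel,
      ← h.sub_eq_integral htd (right_mem_Icc.2 h.le)]
    abel

lemma of_hasDerivAt [CompleteSpace E] (hab : a ≤ b) (hd : ∀ t, HasDerivAt f (g t) t)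
    (hg : Continuous g) : IsPrimitiveOn f g a b where
  le := hab
  intervalIntegrable := hg.intervalIntegrable a b
  eq_integral t _ := by
    rw [integral_eq_sub_of_hasDerivAt (fun r _ ↦ hd r) (hg.intervalIntegrable a t),
      add_sub_cancel]

lemma hasDerivAt [CompleteSpace E] (h : IsPrimitiveOn f g a b) (hg : ContinuousOn g (Icc a b))
    {t : ℝ} (ht : t ∈ Ioo a b) : HasDerivAt f (g t) t := by
  have hnhds : Icc a b ∈ nhds t := Icc_mem_nhds ht.1 ht.2
  have hprim : HasDerivAt (fun t ↦ ∫ r in a..t, g r) (g t) t := by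
    refine integral_hasDerivAt_right
      (h.intervalIntegrable_of_mem (left_mem_Icc.2 h.le) (Ioo_subset_Icc_self ht)) ?_
      (hg.continuousAt hnhds)
    exact (hg.mono Ioo_subset_Icc_self).stronglyMeasurableAtFilter isOpen_Ioo t ht
  refine (hprim.const_add (f a)).congr_of_eventuallyEq ?_
  filter_upwards [hnhds] with r hr using h.eq_integral r hr

lemma norm_sub_le (h : IsPrimitiveOn f g a b) {C : ℝ} (hg : ∀ t ∈ Icc a b, ‖g t‖ ≤ C)
    {t t' : ℝ} (ht : t ∈ Icc a b) (ht' : t' ∈ Icc a b) : ‖f t' - f t‖ ≤ C * |t' - t| := by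
  rw [h.sub_eq_integral ht ht']
  exact norm_integral_le_of_norm_le_const fun r hr ↦
    hg r (uIcc_subset_Icc ht ht' (uIoc_subset_uIcc hr))

lemma mul_sub_le_sub {f g : ℝ → ℝ} {m t t' : ℝ} (h : IsPrimitiveOn f g a b)
    (ht : t ∈ Icc a b) (ht' : t' ∈ Icc a b) (htt' : t ≤ t') (hg : ∀ r ∈ Icc t t', m ≤ g r) :
    m * (t' - t) ≤ f t' - f t := by
  rw [h.sub_eq_integral ht ht', mul_comm, ← smul_eq_mul, ← intervalIntegral.integral_const]
  exact integral_mono_on htt' (by simp) (h.intervalIntegrable_of_mem ht ht') hg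

lemma add (h : IsPrimitiveOn f g a b) (h' : IsPrimitiveOn f' g' a b) :
    IsPrimitiveOn (fun t ↦ f t + f' t) (fun t ↦ g t + g' t) a b where
  le := h.le
  intervalIntegrable := h.intervalIntegrable.add h'.intervalIntegrable
  eq_integral t ht := by
    have ha : a ∈ Icc a b := left_mem_Icc.2 h.le
    rw [h.eq_integral t ht, h'.eq_integral t ht, integral_add (h.intervalIntegrable_of_mem ha ht)
      (h'.intervalIntegrable_of_mem ha ht)]
    abel

lemma clm_comp [CompleteSpace E] [CompleteSpace F] (h : IsPrimitiveOn f g a b) (L : E →L[ℝ] F) :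
    IsPrimitiveOn (fun t ↦ L (f t)) (fun t ↦ L (g t)) a b where
  le := h.le
  intervalIntegrable := ⟨L.integrable_comp h.intervalIntegrable.1,
    L.integrable_comp h.intervalIntegrable.2⟩
  eq_integral t ht := by
    rw [L.intervalIntegral_comp_comm (h.intervalIntegrable_of_mem (left_mem_Icc.2 h.le) ht),
      h.eq_integral t ht, map_add]

lemma neg [CompleteSpace E] (h : IsPrimitiveOn f g a b) :
    IsPrimitiveOn (fun t ↦ -f t) (fun t ↦ -g t) a b :=
  h.clm_comp (-.id ℝ E)

lemma const_mul {f g : ℝ → ℝ} (h : IsPrimitiveOn f g a b) (k : ℝ) :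
    IsPrimitiveOn (fun t ↦ k * f t) (fun t ↦ k * g t) a b :=
  h.clm_comp (k • .id ℝ ℝ)

lemma pi {ι : Type*} [Fintype ι] {f g : ℝ → ι → ℝ} (hab : a ≤ b)
    (h : ∀ i, IsPrimitiveOn (fun t ↦ f t i) (fun t ↦ g t i) a b) : IsPrimitiveOn f g a b where
  le := hab
  intervalIntegrable := by
    refine (intervalIntegrable_iff_integrableOn_Ioc_of_le hab).2 (Integrable.of_eval fun i ↦ ?_)
    exact (intervalIntegrable_iff_integrableOn_Ioc_of_le hab).1 (h i).intervalIntegrable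
  eq_integral t ht := by
    funext i
    rw [Pi.add_apply, (h i).eq_integral t ht, integral_of_le ht.1, integral_of_le ht.1,
      eval_integral]
    intro j
    exact (intervalIntegrable_iff_integrableOn_Ioc_of_le ht.1).1
      ((h j).intervalIntegrable_of_mem (left_mem_Icc.2 hab) ht)

lemma exists_absolutelyContinuousOnInterval {f g : ℝ → ℝ} (h : IsPrimitiveOn f g a b) :
    ∃ f₀ : ℝ → ℝ, EqOn f f₀ (Icc a b) ∧ AbsolutelyContinuousOnInterval f₀ a b ∧
      ∀ᵐ t, t ∈ uIcc a b → deriv f₀ t = g t := by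
  refine ⟨fun t ↦ f a + ∫ r in a..t, g r, h.eq_integral, ?_, ?_⟩
  · have hconst : AbsolutelyContinuousOnInterval (fun _ ↦ f a) a b :=
      contDiffOn_const.absolutelyContinuousOnInterval
    exact hconst.fun_add
      (h.intervalIntegrable.absolutelyContinuousOnInterval_intervalIntegral left_mem_uIcc)
  · filter_upwards [h.intervalIntegrable.ae_hasDerivAt_integral] with t ht htm
    exact ((ht htm a left_mem_uIcc).const_add (f a)).deriv

lemma mul {f g φ φ' : ℝ → ℝ} (hφ : IsPrimitiveOn φ φ' a b) (h : IsPrimitiveOn f g a b) :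
    IsPrimitiveOn (fun t ↦ φ t * f t) (fun t ↦ φ' t * f t + φ t * g t) a b where
  le := h.le
  intervalIntegrable := by
    have hf := h.continuousOn
    have hφc := hφ.continuousOn
    rw [← uIcc_of_le h.le] at hf hφc
    exact (hφ.intervalIntegrable.mul_continuousOn hf).add
      (h.intervalIntegrable.continuousOn_mul hφc)
  eq_integral t ht := by
    obtain ⟨f₀, hf, hfac, hfd⟩ := (h.mono le_rfl ht.1 ht.2).exists_absolutelyContinuousOnInterval
    obtain ⟨φ₀, hφ, hφac, hφd⟩ := (hφ.mono le_rfl ht.1 ht.2).exists_absolutelyContinuousOnInterval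
    have hparts : ∫ r in a..t, (φ' r * f r + φ r * g r) = φ₀ t * f₀ t - φ₀ a * f₀ a := by
      rw [← hφac.integral_deriv_mul_eq_sub hfac]
      refine integral_congr_ae ?_
      filter_upwards [hfd, hφd] with r hr hr' hrm
      have hr₀ := uIoc_subset_uIcc hrm
      rw [hr hr₀, hr' hr₀]
      rw [uIcc_of_le ht.1] at hr₀
      rw [hf hr₀, hφ hr₀]
    rw [hparts, ← hf (left_mem_Icc.2 ht.1), ← hf (right_mem_Icc.2 ht.1),
      ← hφ (left_mem_Icc.2 ht.1), ← hφ (right_mem_Icc.2 ht.1), add_sub_cancel]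

end IsPrimitiveOn

lemma arccos_sub_arccos_le {f f' : ℝ → ℝ} {κ : ℝ} (hab : a ≤ b) (hκ : 0 ≤ κ)
    (hc : ContinuousOn f (Icc a b)) (hd : ∀ t ∈ Ioo a b, HasDerivAt f (f' t) t)
    (hpos : ∀ t ∈ Ioo a b, 0 < f' t) (hle : ∀ t ∈ Ioo a b, f' t ^ 2 ≤ κ ^ 2 * (1 - f t ^ 2)) :
    arccos (f a) - arccos (f b) ≤ κ * (b - a) := by
  have hlt : ∀ t ∈ Ioo a b, 0 < 1 - f t ^ 2 := fun t ht ↦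
    pos_of_mul_pos_right ((pow_pos (hpos t ht) 2).trans_le (hle t ht)) (sq_nonneg κ)
  have hderiv : ∀ t ∈ Ioo a b, HasDerivAt (fun t ↦ arccos (f t) + κ * t)
      (-(1 / √(1 - f t ^ 2)) * f' t + κ * 1) t := fun t ht ↦ by
    have hft := abs_lt.1 ((sq_lt_one_iff_abs_lt_one _).1 (sub_pos.1 (hlt t ht)))
    exact ((hasDerivAt_arccos hft.1.ne' hft.2.ne).comp t (hd t ht)).add
      ((hasDerivAt_id t).const_mul κ)
  have hmono : MonotoneOn (fun t ↦ arccos (f t) + κ * t) (Icc a b) := by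
    refine monotoneOn_of_hasDerivWithinAt_nonneg (convex_Icc a b)
      ((continuous_arccos.comp_continuousOn hc).add (by fun_prop))
      (fun t ht ↦ (hderiv t (by rwa [interior_Icc] at ht)).hasDerivWithinAt) fun t ht ↦ ?_
    rw [interior_Icc] at ht
    have hspeed : f' t ≤ κ * √(1 - f t ^ 2) := by
      refine le_of_sq_le_sq ?_ (by positivity)
      rw [mul_pow, sq_sqrt (hlt t ht).le]
      exact hle t ht
    have hquot : f' t / √(1 - f t ^ 2) ≤ κ := (div_le_iff₀ (sqrt_pos.2 (hlt t ht))).2 hspeed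
    rw [neg_mul, one_div_mul_eq_div, mul_one]
    linarith
  have := hmono (left_mem_Icc.2 hab) (right_mem_Icc.2 hab) hab
  dsimp only at this
  linarith

lemma exists_first_zero {f : ℝ → ℝ} (hab : a ≤ b) (hf : ContinuousOn f (Icc a b))
    (ha : 0 < f a) (hb : f b ≤ 0) :
    ∃ r ∈ Ioc a b, f r = 0 ∧ ∀ t ∈ Ico a r, 0 < f t := by
  have hcompact : IsCompact (Icc a b ∩ f ⁻¹' Iic 0) :=
    isCompact_Icc.of_isClosed_subset (hf.preimage_isClosed_of_isClosed isClosed_Icc isClosed_Iic)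
      inter_subset_left
  obtain ⟨r, ⟨hr, hfr⟩, hleast⟩ := hcompact.exists_isLeast ⟨b, ⟨hab, le_rfl⟩, hb⟩
  have hpos : ∀ t ∈ Ico a r, 0 < f t := fun t ht ↦ by
    by_contra! hft
    exact (hleast ⟨⟨ht.1, ht.2.le.trans hr.2⟩, hft⟩).not_gt ht.2
  refine ⟨r, ⟨hr.1.lt_of_ne ?_, hr.2⟩, ?_, hpos⟩
  · rintro rfl
    exact ha.not_ge hfr
  · obtain ⟨t, ht, hft⟩ := intermediate_value_Icc' hr.1 (hf.mono (Icc_subset_Icc_right hr.2))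
      (show (0 : ℝ) ∈ Icc (f r) (f a) from ⟨hfr, ha.le⟩)
    rcases ht.2.lt_or_eq with htr | rfl
    · exact absurd hft (hpos t ⟨ht.1, htr⟩).ne'
    · exact hft

lemma exists_last_zero {f : ℝ → ℝ} (hab : a ≤ b) (hf : ContinuousOn f (Icc a b))
    (ha : 0 ≤ f a) (hb : f b < 0) :
    ∃ r ∈ Ico a b, f r = 0 ∧ ∀ t ∈ Ioc r b, f t < 0 := by
  have hcont : ContinuousOn (fun t ↦ -f (a + b - t)) (Icc a b) :=
    (hf.comp (f := fun t ↦ a + b - t) (by fun_prop)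
      fun t ht ↦ ⟨by linarith [ht.2], by linarith [ht.1]⟩).neg
  obtain ⟨r, hr, hfr, hpos⟩ := exists_first_zero hab hcont (by simpa using hb) (by simpa using ha)
  refine ⟨a + b - r, ⟨by linarith [hr.2], by linarith [hr.1]⟩, neg_eq_zero.1 hfr, fun t ht ↦ ?_⟩
  simpa using hpos (a + b - t) ⟨by linarith [ht.2], by linarith [ht.1]⟩

lemma pos_of_ne_zero_of_pos_right {f : ℝ → ℝ} (hf : ContinuousOn f (Icc a b)) (hb : 0 < f b)
    (hne : ∀ t ∈ Ioc a b, f t ≠ 0) : ∀ t ∈ Ioc a b, 0 < f t := fun t ht ↦ by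
  by_contra! hft
  obtain ⟨r, hr, hfr⟩ := intermediate_value_Icc ht.2 (hf.mono (Icc_subset_Icc_left ht.1.le))
    (show (0 : ℝ) ∈ Icc (f t) (f b) from ⟨hft, hb.le⟩)
  exact hne r ⟨ht.1.trans_le hr.1, hr.2⟩ hfr

lemma norm_integral_smul_sub_le [CompleteSpace E] {w : ℝ → ℝ} {q : ℝ → E} {m : E} {ε : ℝ}
    (hab : a ≤ b) (hw : IntervalIntegrable w volume a b)
    (hwq : IntervalIntegrable (fun r ↦ w r • q r) volume a b)
    (hw0 : ∀ r ∈ Icc a b, 0 ≤ w r) (hq : ∀ r ∈ Icc a b, ‖q r - m‖ ≤ ε) :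
    ‖(∫ r in a..b, w r • q r) - (∫ r in a..b, w r) • m‖ ≤ ε * ∫ r in a..b, w r := by
  have hwm : IntervalIntegrable (fun r ↦ w r • m) volume a b :=
    ⟨hw.1.smul_const m, hw.2.smul_const m⟩
  rw [← intervalIntegral.integral_smul_const, ← intervalIntegral.integral_sub hwq hwm,
    ← intervalIntegral.integral_const_mul]
  refine norm_integral_le_of_norm_le hab (.of_forall fun r hr ↦ ?_) (hw.const_mul ε)
  have hr' : r ∈ Icc a b := Ioc_subset_Icc_self hr
  rw [← smul_sub, norm_smul, Real.norm_of_nonneg (hw0 r hr'), mul_comm]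
  exact mul_le_mul_of_nonneg_right (hq r hr') (hw0 r hr')

lemma integral_smul_eq_zero_of_integral_eq_zero {w : ℝ → ℝ} {q : ℝ → E} (hab : a ≤ b)
    (hw : IntervalIntegrable w volume a b) (hw0 : ∀ r ∈ Ioc a b, 0 ≤ w r)
    (hzero : ∫ r in a..b, w r = 0) : ∫ r in a..b, w r • q r = 0 := by
  have hae : w =ᵐ[volume.restrict (Ioc a b)] 0 := by
    refine (integral_eq_zero_iff_of_le_of_nonneg_ae hab ?_ hw).1 hzero
    filter_upwards [ae_restrict_mem measurableSet_Ioc] with r hr using hw0 r hr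
  refine integral_zero_ae ?_
  rw [uIoc_of_le hab, ← ae_restrict_iff' measurableSet_Ioc]
  filter_upwards [hae] with r hr
  simp [hr]

lemma continuousOn_integral_left {g : ℝ → E} (hab : a ≤ b) (hg : IntervalIntegrable g volume a b) :
    ContinuousOn (fun t ↦ ∫ r in t..b, g r) (Icc a b) := by
  have hprim := continuousOn_primitive_interval' hg right_mem_uIcc
  rw [uIcc_of_le hab] at hprim
  exact hprim.neg.congr fun t _ ↦ integral_symm b t

lemma exists_last_pos_integral {w : ℝ → ℝ} (hab : a ≤ b) (hw : IntervalIntegrable w volume a b)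
    (hw0 : ∀ r ∈ Icc a b, 0 ≤ w r) :
    ∃ S ∈ Icc a b, ∫ r in S..b, w r = 0 ∧ ∀ σ ∈ Ico a S, 0 < ∫ r in σ..S, w r := by
  have hint : ∀ {t t'}, t ∈ Icc a b → t' ∈ Icc a b → IntervalIntegrable w volume t t' :=
    fun ht ht' ↦ hw.mono_set (uIcc_subset_uIcc (Icc_subset_uIcc ht) (Icc_subset_uIcc ht'))
  have hb : b ∈ Icc a b := right_mem_Icc.2 hab
  have hcompact : IsCompact (Icc a b ∩ (fun σ ↦ ∫ r in σ..b, w r) ⁻¹' {0}) :=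
    isCompact_Icc.of_isClosed_subset
      ((continuousOn_integral_left hab hw).preimage_isClosed_of_isClosed isClosed_Icc
        isClosed_singleton) inter_subset_left
  obtain ⟨S, ⟨hS, hSb⟩, hleast⟩ := hcompact.exists_isLeast ⟨b, hb, integral_same⟩
  refine ⟨S, hS, hSb, fun σ hσ ↦ ?_⟩
  have hσ' : σ ∈ Icc a b := ⟨hσ.1, hσ.2.le.trans hS.2⟩
  have hsplit : ∫ r in σ..S, w r = ∫ r in σ..b, w r := by
    rw [← integral_add_adjacent_intervals (hint hσ' hS) (hint hS hb),
      show ∫ r in S..b, w r = 0 from hSb, add_zero]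
  refine (integral_nonneg hσ.2.le fun r hr ↦ hw0 r ⟨hσ.1.trans hr.1, hr.2.trans hS.2⟩).lt_of_ne' ?_
  rw [hsplit]
  exact fun hzero ↦ (hleast ⟨hσ', hzero⟩).not_gt hσ.2

lemma exists_forall_norm_sub_le_and_integral_lt {G : Type*} [SeminormedAddCommGroup G] {w : ℝ → ℝ}
    {q : ℝ → G} {S ε : ℝ} (haS : a < S) (hw : IntervalIntegrable w volume a S)
    (hq : ContinuousOn q (Icc a S)) (hε : 0 < ε) :
    ∃ σ ∈ Ioo a S, ∫ r in σ..S, w r < ε ∧ ∀ r ∈ Icc σ S, ‖q r - q S‖ ≤ ε := by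
  have hS : S ∈ Icc a S := right_mem_Icc.2 haS.le
  have hsmall : ∀ᶠ σ in nhdsWithin S (Icc a S), ∫ r in σ..S, w r < ε :=
    (continuousOn_integral_left haS.le hw S hS).eventually_lt_const (by simpa using hε)
  have hnear : ∀ᶠ σ in nhdsWithin S (Icc a S), ‖q σ - q S‖ ≤ ε := by
    have := ((hq S hS).sub_const (q S)).norm
    exact this.eventually_le_const (by simpa using hε)
  obtain ⟨δ, hδ, hball⟩ := Metric.mem_nhdsWithin_iff.1 (hsmall.and hnear)
  obtain ⟨σ, hσ, hσS⟩ := exists_between (max_lt haS (sub_lt_self S hδ))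
  obtain ⟨haσ, hδσ⟩ := max_lt_iff.1 hσ
  have hgood : ∀ r ∈ Icc σ S, ∫ t in r..S, w t < ε ∧ ‖q r - q S‖ ≤ ε := fun r hr ↦ by
    refine hball ⟨?_, haσ.le.trans hr.1, hr.2⟩
    rw [Metric.mem_ball, Real.dist_eq, abs_lt]
    constructor <;> linarith [hr.1, hr.2]
  exact ⟨σ, ⟨haσ, hσS⟩, (hgood σ (left_mem_Icc.2 hσS.le)).1, fun r hr ↦ (hgood r hr).2⟩

lemma IsPrimitiveOn.exists_last_direction [CompleteSpace E] {f : ℝ → E} {w : ℝ → ℝ} {q : ℝ → E}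
    (h : IsPrimitiveOn f (fun t ↦ w t • q t) a b) (hw : IntervalIntegrable w volume a b)
    (hw0 : ∀ t ∈ Icc a b, 0 ≤ w t) (hq : ContinuousOn q (Icc a b)) :
    ∃ S ∈ Icc a b, (∀ t ∈ Icc S b, f t = f b) ∧
      (a < S → ∀ ε > 0, ∃ σ ∈ Ioo a S, ∃ ρ ∈ Ioo 0 ε, ‖f b - f σ - ρ • q S‖ ≤ ε * ρ) := by
  obtain ⟨S, hS, hzero, hpos⟩ := exists_last_pos_integral h.le hw hw0
  have hint : ∀ {t t'}, t ∈ Icc a b → t' ∈ Icc a b → IntervalIntegrable w volume t t' :=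
    fun ht ht' ↦ hw.mono_set (uIcc_subset_uIcc (Icc_subset_uIcc ht) (Icc_subset_uIcc ht'))
  have hb : b ∈ Icc a b := right_mem_Icc.2 h.le
  have hSb : ∀ t ∈ Icc S b, f t = f b := fun t ht ↦ by
    have ht' : t ∈ Icc a b := ⟨hS.1.trans ht.1, ht.2⟩
    have hle : ∫ r in t..b, w r ≤ 0 := by
      rw [← hzero, ← integral_add_adjacent_intervals (hint hS ht') (hint ht' hb)]
      exact le_add_of_nonneg_left <|
        integral_nonneg ht.1 fun r hr ↦ hw0 r ⟨hS.1.trans hr.1, hr.2.trans ht.2⟩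
    have hw0' : ∀ r ∈ Icc t b, 0 ≤ w r := fun r hr ↦ hw0 r ⟨ht'.1.trans hr.1, hr.2⟩
    have := h.sub_eq_integral ht' hb
    rw [integral_smul_eq_zero_of_integral_eq_zero ht.2 (hint ht' hb)
      (fun r hr ↦ hw0' r (Ioc_subset_Icc_self hr))
      (hle.antisymm (integral_nonneg ht.2 hw0'))] at this
    exact (sub_eq_zero.1 this).symm
  refine ⟨S, hS, hSb, fun haS ε hε ↦ ?_⟩
  obtain ⟨σ, hσ, hσε, hqσ⟩ := exists_forall_norm_sub_le_and_integral_lt haS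
    (hint (left_mem_Icc.2 h.le) hS) (hq.mono (Icc_subset_Icc_right hS.2)) hε
  have hσ' : σ ∈ Icc a b := ⟨hσ.1.le, hσ.2.le.trans hS.2⟩
  refine ⟨σ, hσ, ∫ r in σ..S, w r, ⟨hpos σ (Ioo_subset_Ico_self hσ), hσε⟩, ?_⟩
  rw [← hSb S (left_mem_Icc.2 hS.2), h.sub_eq_integral hσ' hS]
  exact norm_integral_smul_sub_le hσ.2.le (hint hσ' hS) (h.intervalIntegrable_of_mem hσ' hS)
    (fun r hr ↦ hw0 r ⟨hσ.1.le.trans hr.1, hr.2.trans hS.2⟩) hqσ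

end Calculus

/-! ### The control system -/

/-- The sphere `S²` in the coordinates of the control system. The type `Fin 3 → ℝ` carries the sup
norm, so this is not `Metric.sphere 0 1`. -/
def euclideanSphere : Set (Fin 3 → ℝ) := {p | p 0 ^ 2 + p 1 ^ 2 + p 2 ^ 2 = 1}

lemma mem_euclideanSphere {p : Fin 3 → ℝ} :
    p ∈ euclideanSphere ↔ p 0 ^ 2 + p 1 ^ 2 + p 2 ^ 2 = 1 := Iff.rfl

lemma vec3_ext {p q : Fin 3 → ℝ} (h0 : p 0 = q 0) (h1 : p 1 = q 1) (h2 : p 2 = q 2) : p = q := by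
  funext i
  fin_cases i <;> assumption

lemma norm_vec3_le {p : Fin 3 → ℝ} {C : ℝ} (h0 : |p 0| ≤ C) (h1 : |p 1| ≤ C) (h2 : |p 2| ≤ C) :
    ‖p‖ ≤ C := by
  refine (pi_norm_le_iff_of_nonneg ((abs_nonneg _).trans h0)).2 fun i ↦ ?_
  fin_cases i <;> assumption

section VectorFields

variable {α : ℝ} {p : Fin 3 → ℝ}

@[simp] lemma FS_apply_zero : FS α p 0 = -(cos α * p 1) := mul_neg _ _

@[simp] lemma FS_apply_one : FS α p 1 = cos α * p 0 := rfl

@[simp] lemma FS_apply_two : FS α p 2 = 0 := rfl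

@[simp] lemma GS_apply_zero : GS α p 0 = 0 := rfl

@[simp] lemma GS_apply_one : GS α p 1 = -(sin α * p 2) := mul_neg _ _

@[simp] lemma GS_apply_two : GS α p 2 = sin α * p 1 := rfl

end VectorFields

lemma continuous_GS (α : ℝ) : Continuous (GS α) := by
  unfold GS
  fun_prop

lemma continuous_FS (α : ℝ) : Continuous (FS α) := by
  unfold FS
  fun_prop

lemma norm_FS_add_smul_GS_le {α v : ℝ} {p : Fin 3 → ℝ} (hv : |v| ≤ 1) (hp : p ∈ euclideanSphere) :
    ‖FS α p + v • GS α p‖ ≤ 1 := by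
  have hv' : v ^ 2 ≤ 1 := (sq_le_one_iff_abs_le_one v).2 hv
  have hα := sin_sq_add_cos_sq α
  have hsp := mem_euclideanSphere.1 hp
  have hp1 : p 1 ^ 2 ≤ 1 := by nlinarith [sq_nonneg (p 0), sq_nonneg (p 2)]
  have hc1 : cos α ^ 2 ≤ 1 := cos_sq_le_one α
  have hs1 : sin α ^ 2 ≤ 1 := sin_sq_le_one α
  refine norm_vec3_le ?_ ?_ ?_ <;> rw [← sq_le_one_iff_abs_le_one]
  · simp only [Pi.add_apply, Pi.smul_apply, FS_apply_zero, GS_apply_zero, smul_zero, add_zero]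
    nlinarith [mul_le_one₀ hc1 (sq_nonneg (p 1)) hp1]
  · simp only [Pi.add_apply, Pi.smul_apply, FS_apply_one, GS_apply_one, smul_eq_mul]
    have hsv : (sin α * v) ^ 2 ≤ sin α ^ 2 := by
      rw [mul_pow]; exact mul_le_of_le_one_right (sq_nonneg _) hv'
    nlinarith [sq_nonneg (cos α * p 2 + sin α * v * p 0), sq_nonneg (p 1),
      mul_le_mul_of_nonneg_right hsv (sq_nonneg (p 0)),
      mul_le_mul_of_nonneg_right hsv (sq_nonneg (p 2)), sq_nonneg (p 0), sq_nonneg (p 2)]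
  · simp only [Pi.add_apply, Pi.smul_apply, FS_apply_two, GS_apply_two, smul_eq_mul, zero_add,
      mul_pow]
    exact mul_le_one₀ hv' (by positivity) (mul_le_one₀ hs1 (sq_nonneg _) hp1)

namespace AdmissiblePairS

variable {α a b : ℝ} {γ : ℝ → Fin 3 → ℝ} {u : ℝ → ℝ}

lemma intervalIntegrable_mul (h : AdmissiblePairS α a b γ u) {f : ℝ → ℝ}
    (hf : ContinuousOn f (Icc a b)) : IntervalIntegrable (fun t ↦ u t * f t) volume a b := by
  have hf' : IntervalIntegrable f volume a b := (hf.mono (uIcc_of_le h.hab).le).intervalIntegrable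
  rw [intervalIntegrable_iff_integrableOn_Icc_of_le h.hab] at hf' ⊢
  refine Integrable.bdd_mul (c := 1) hf' h.humeas.aestronglyMeasurable ?_
  filter_upwards [ae_restrict_mem measurableSet_Icc] with t ht using h.hubound t ht

lemma isPrimitiveOn (h : AdmissiblePairS α a b γ u) :
    IsPrimitiveOn γ (fun t ↦ FS α (γ t) + u t • GS α (γ t)) a b := by
  refine .pi h.hab fun i ↦ ⟨h.hab, ?_, fun t ht ↦ h.hode t ht i⟩
  have hF : ContinuousOn (fun t ↦ FS α (γ t) i) (Icc a b) :=
    ((continuous_apply i).comp (continuous_FS α)).comp_continuousOn h.hcont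
  have hG : ContinuousOn (fun t ↦ GS α (γ t) i) (Icc a b) :=
    ((continuous_apply i).comp (continuous_GS α)).comp_continuousOn h.hcont
  exact (hF.mono (uIcc_of_le h.hab).le).intervalIntegrable.add (h.intervalIntegrable_mul hG)

lemma of_isPrimitiveOn (hu : Measurable u) (hu1 : ∀ t ∈ Icc a b, |u t| ≤ 1)
    (hγ : ∀ t ∈ Icc a b, γ t ∈ euclideanSphere)
    (h : IsPrimitiveOn γ (fun t ↦ FS α (γ t) + u t • GS α (γ t)) a b) :
    AdmissiblePairS α a b γ u where
  hab := h.le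
  humeas := hu
  hubound := hu1
  hsph := hγ
  hcont := h.continuousOn
  hode t ht i := (h.clm_comp (.proj i)).eq_integral t ht

lemma isPrimitiveOn_zero (h : AdmissiblePairS α a b γ u) :
    IsPrimitiveOn (fun t ↦ γ t 0) (fun t ↦ -(cos α * γ t 1)) a b :=
  (h.isPrimitiveOn.clm_comp (.proj 0)).congr (eqOn_refl _ _) fun t _ ↦ by simp

lemma isPrimitiveOn_one (h : AdmissiblePairS α a b γ u) :
    IsPrimitiveOn (fun t ↦ γ t 1) (fun t ↦ cos α * γ t 0 - u t * (sin α * γ t 2)) a b :=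
  (h.isPrimitiveOn.clm_comp (.proj 1)).congr (eqOn_refl _ _) fun t _ ↦ by
    simp [sub_eq_add_neg]

lemma isPrimitiveOn_two (h : AdmissiblePairS α a b γ u) :
    IsPrimitiveOn (fun t ↦ γ t 2) (fun t ↦ u t * (sin α * γ t 1)) a b :=
  (h.isPrimitiveOn.clm_comp (.proj 2)).congr (eqOn_refl _ _) fun t _ ↦ by simp

lemma of_isPrimitiveOn_coord (hu : Measurable u) (hu1 : ∀ t ∈ Icc a b, |u t| ≤ 1)
    (hγ : ∀ t ∈ Icc a b, γ t ∈ euclideanSphere)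
    (h0 : IsPrimitiveOn (fun t ↦ γ t 0) (fun t ↦ -(cos α * γ t 1)) a b)
    (h1 : IsPrimitiveOn (fun t ↦ γ t 1) (fun t ↦ cos α * γ t 0 - u t * (sin α * γ t 2)) a b)
    (h2 : IsPrimitiveOn (fun t ↦ γ t 2) (fun t ↦ u t * (sin α * γ t 1)) a b) :
    AdmissiblePairS α a b γ u := by
  refine .of_isPrimitiveOn hu hu1 hγ (.pi h0.le fun i ↦ ?_)
  fin_cases i
  · exact h0.congr (eqOn_refl _ _) fun t _ ↦ by simp
  · exact h1.congr (eqOn_refl _ _) fun t _ ↦ by simp [sub_eq_add_neg]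
  · exact h2.congr (eqOn_refl _ _) fun t _ ↦ by simp

lemma mono (h : AdmissiblePairS α a b γ u) {a' b' : ℝ} (ha : a ≤ a') (hab : a' ≤ b')
    (hb : b' ≤ b) : AdmissiblePairS α a' b' γ u :=
  .of_isPrimitiveOn h.humeas (fun t ht ↦ h.hubound t (Icc_subset_Icc ha hb ht))
    (fun t ht ↦ h.hsph t (Icc_subset_Icc ha hb ht)) (h.isPrimitiveOn.mono ha hab hb)

lemma comp_add_right (h : AdmissiblePairS α a b γ u) (d : ℝ) :
    AdmissiblePairS α (a - d) (b - d) (fun t ↦ γ (t + d)) (fun t ↦ u (t + d)) := by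
  have hmem : ∀ t ∈ Icc (a - d) (b - d), t + d ∈ Icc a b := fun t ht ↦
    ⟨sub_le_iff_le_add.1 ht.1, le_sub_iff_add_le.1 ht.2⟩
  exact .of_isPrimitiveOn (h.humeas.comp (measurable_add_const d))
    (fun t ht ↦ h.hubound _ (hmem t ht)) (fun t ht ↦ h.hsph _ (hmem t ht))
    (h.isPrimitiveOn.comp_add_right d)

lemma trans {c : ℝ} {γ' : ℝ → Fin 3 → ℝ} {u' : ℝ → ℝ} (h : AdmissiblePairS α a b γ u)
    (h' : AdmissiblePairS α b c γ' u') (hb : γ b = γ' b) :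
    AdmissiblePairS α a c (fun t ↦ if t ≤ b then γ t else γ' t)
      (fun t ↦ if t ≤ b then u t else u' t) := by
  have hγ : ∀ t ∈ Icc b c, (if t ≤ b then γ t else γ' t) = γ' t := fun t ht ↦ by
    split_ifs with htb
    · rw [htb.antisymm ht.1, hb]
    · rfl
  refine .of_isPrimitiveOn (.ite measurableSet_Iic h.humeas h'.humeas) (fun t ht ↦ ?_)
    (fun t ht ↦ ?_) (IsPrimitiveOn.trans (b := b) (h.isPrimitiveOn.congr (fun t ht ↦ if_pos ht.2)
      fun t ht ↦ ?_) (h'.isPrimitiveOn.congr hγ fun t ht ↦ ?_))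
  · split_ifs with htb
    exacts [h.hubound t ⟨ht.1, htb⟩, h'.hubound t ⟨(not_le.1 htb).le, ht.2⟩]
  · split_ifs with htb
    exacts [h.hsph t ⟨ht.1, htb⟩, h'.hsph t ⟨(not_le.1 htb).le, ht.2⟩]
  · simp only [ht.2.le, if_true]
  · simp only [not_le.2 ht.1, if_false]

lemma norm_sub_le (h : AdmissiblePairS α a b γ u) {t t' : ℝ} (ht : t ∈ Icc a b)
    (ht' : t' ∈ Icc a b) : ‖γ t' - γ t‖ ≤ |t' - t| := by
  simpa using h.isPrimitiveOn.norm_sub_le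
    (fun r hr ↦ norm_FS_add_smul_GS_le (h.hubound r hr) (h.hsph r hr)) ht ht'

end AdmissiblePairS

/-! ### Symmetries and reachability -/

/-- Reflection in the plane of the equator: a symmetry of the system, with `u` replaced
by `-u`. -/
def equatorReflection (p : Fin 3 → ℝ) : Fin 3 → ℝ := ![p 0, p 1, -p 2]

/-- Half turn about the vertical axis: a symmetry of the system, with `u` replaced by `-u`. -/
def halfTurn (p : Fin 3 → ℝ) : Fin 3 → ℝ := ![-p 0, -p 1, p 2]

/-- Reflection in the plane `y₂ = 0`: it turns trajectories into time reversed trajectories. -/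
def meridianReflection (p : Fin 3 → ℝ) : Fin 3 → ℝ := ![p 0, -p 1, p 2]

namespace AdmissiblePairS

variable {α a b : ℝ} {γ : ℝ → Fin 3 → ℝ} {u : ℝ → ℝ}

lemma comp_equatorReflection (h : AdmissiblePairS α a b γ u) :
    AdmissiblePairS α a b (fun t ↦ equatorReflection (γ t)) (fun t ↦ -u t) := by
  refine .of_isPrimitiveOn_coord h.humeas.neg (fun t ht ↦ ?_) (fun t ht ↦ ?_)
    h.isPrimitiveOn_zero (h.isPrimitiveOn_one.congr (eqOn_refl _ _) fun t _ ↦ ?_)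
    (h.isPrimitiveOn_two.neg.congr (eqOn_refl _ _) fun t _ ↦ ?_)
  · simpa using h.hubound t ht
  · simpa [mem_euclideanSphere, equatorReflection] using h.hsph t ht
  · simp [equatorReflection]
  · simp [equatorReflection]

lemma comp_halfTurn (h : AdmissiblePairS α a b γ u) :
    AdmissiblePairS α a b (fun t ↦ halfTurn (γ t)) (fun t ↦ -u t) := by
  refine .of_isPrimitiveOn_coord h.humeas.neg (fun t ht ↦ ?_) (fun t ht ↦ ?_)
    (h.isPrimitiveOn_zero.neg.congr (eqOn_refl _ _) fun t _ ↦ ?_)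
    (h.isPrimitiveOn_one.neg.congr (eqOn_refl _ _) fun t _ ↦ ?_)
    (h.isPrimitiveOn_two.congr (eqOn_refl _ _) fun t _ ↦ ?_)
  · simpa using h.hubound t ht
  · simpa [mem_euclideanSphere, halfTurn] using h.hsph t ht
  · simp [halfTurn]
  · simp [halfTurn]; ring
  · simp [halfTurn]

lemma comp_meridianReflection (h : AdmissiblePairS α a b γ u) (d : ℝ) :
    AdmissiblePairS α (d - b) (d - a) (fun t ↦ meridianReflection (γ (d - t)))
      (fun t ↦ u (d - t)) := by
  have hmem : ∀ t ∈ Icc (d - b) (d - a), d - t ∈ Icc a b := fun t ht ↦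
    ⟨by linarith [ht.2], by linarith [ht.1]⟩
  refine .of_isPrimitiveOn_coord (h.humeas.comp (measurable_const.sub measurable_id))
    (fun t ht ↦ h.hubound _ (hmem t ht)) (fun t ht ↦ ?_)
    ((h.isPrimitiveOn_zero.comp_sub_left d).congr (eqOn_refl _ _) fun t _ ↦ ?_)
    ((h.isPrimitiveOn_one.comp_sub_left d).neg.congr (eqOn_refl _ _) fun t _ ↦ ?_)
    ((h.isPrimitiveOn_two.comp_sub_left d).congr (eqOn_refl _ _) fun t _ ↦ ?_)
  · simpa [mem_euclideanSphere, meridianReflection] using h.hsph _ (hmem t ht)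
  · simp [meridianReflection]
  · simp [meridianReflection]
  · simp [meridianReflection]

end AdmissiblePairS

lemma equatorReflection_eq_self {p : Fin 3 → ℝ} (hp : p 2 = 0) : equatorReflection p = p :=
  vec3_ext rfl rfl ((neg_eq_zero.2 hp).trans hp.symm)

@[simp] lemma equatorReflection_equatorReflection (p : Fin 3 → ℝ) :
    equatorReflection (equatorReflection p) = p :=
  vec3_ext rfl rfl (neg_neg _)

lemma halfTurn_halfTurn (p : Fin 3 → ℝ) : halfTurn (halfTurn p) = p :=
  vec3_ext (neg_neg _) (neg_neg _) rfl

lemma meridianReflection_eq_self {p : Fin 3 → ℝ} (hp : p 1 = 0) : meridianReflection p = p :=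
  vec3_ext rfl ((neg_eq_zero.2 hp).trans hp.symm) rfl

@[simp] lemma meridianReflection_meridianReflection (p : Fin 3 → ℝ) :
    meridianReflection (meridianReflection p) = p :=
  vec3_ext rfl (neg_neg _) rfl

/-- There is a trajectory from `p` to `q` of duration exactly `T`. -/
def Reaches (α T : ℝ) (p q : Fin 3 → ℝ) : Prop :=
  ∃ γ u, AdmissiblePairS α 0 T γ u ∧ γ 0 = p ∧ γ T = q

/-- No trajectory from `p` to `q` is shorter than `T`. -/
def NotReachedBefore (α T : ℝ) (p q : Fin 3 → ℝ) : Prop :=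
  ∀ T', Reaches α T' p q → T ≤ T'

lemma AdmissiblePairS.reaches {α a b : ℝ} {γ : ℝ → Fin 3 → ℝ} {u : ℝ → ℝ}
    (h : AdmissiblePairS α a b γ u) {t t' : ℝ} (ha : a ≤ t) (htt' : t ≤ t') (hb : t' ≤ b) :
    Reaches α (t' - t) (γ t) (γ t') := by
  have hshift := (h.mono ha htt' hb).comp_add_right t
  rw [sub_self] at hshift
  exact ⟨_, _, hshift, by rw [zero_add], by rw [sub_add_cancel]⟩

namespace Reaches

variable {α T T' : ℝ} {p q r : Fin 3 → ℝ}

lemma trans (h : Reaches α T p q) (h' : Reaches α T' q r) : Reaches α (T + T') p r := by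
  obtain ⟨γ, u, hγ, rfl, rfl⟩ := h
  obtain ⟨γ', u', hγ', h0, rfl⟩ := h'
  have hshift := hγ'.comp_add_right (-T)
  rw [zero_sub, neg_neg, sub_neg_eq_add, add_comm T' T] at hshift
  have hconcat := hγ.trans hshift (by rw [add_neg_cancel, h0])
  refine ⟨_, _, hconcat, if_pos hγ.hab, ?_⟩
  split_ifs with hT'
  · obtain rfl : T' = 0 := le_antisymm (by linarith) hγ'.hab
    rw [add_zero, h0]
  · rw [add_neg_cancel_comm]

lemma equatorReflection (h : Reaches α T p q) :
    Reaches α T (equatorReflection p) (equatorReflection q) := by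
  obtain ⟨γ, u, hγ, rfl, rfl⟩ := h
  exact ⟨_, _, hγ.comp_equatorReflection, rfl, rfl⟩

lemma halfTurn (h : Reaches α T p q) : Reaches α T (halfTurn p) (halfTurn q) := by
  obtain ⟨γ, u, hγ, rfl, rfl⟩ := h
  exact ⟨_, _, hγ.comp_halfTurn, rfl, rfl⟩

lemma meridianReflection (h : Reaches α T p q) :
    Reaches α T (meridianReflection q) (meridianReflection p) := by
  obtain ⟨γ, u, hγ, rfl, rfl⟩ := h
  have hrev := hγ.comp_meridianReflection T
  rw [sub_self, sub_zero] at hrev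
  exact ⟨_, _, hrev, by rw [sub_zero], by rw [sub_self]⟩

end Reaches

lemma NotReachedBefore.of_reaches {α T T' T'' : ℝ} {p q r : Fin 3 → ℝ}
    (h : NotReachedBefore α T p r) (hqr : Reaches α T' q r) (hle : T'' + T' ≤ T) :
    NotReachedBefore α T'' p q :=
  fun _ hpq ↦ le_of_add_le_add_right (hle.trans (h _ (hpq.trans hqr)))

lemma AdmissiblePairS.notReachedBefore {α a b T : ℝ} {γ : ℝ → Fin 3 → ℝ} {u : ℝ → ℝ}
    {p : Fin 3 → ℝ} (h : AdmissiblePairS α a b γ u) (hopt : NotReachedBefore α T p (γ b)) {t : ℝ}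
    (ht : t ∈ Icc a b) : NotReachedBefore α (T - (b - t)) p (γ t) :=
  hopt.of_reaches (h.reaches ht.1 ht.2 le_rfl) (sub_add_cancel T (b - t)).le

/-- The point of longitude `θ` on the equator. -/
noncomputable def equatorPoint (θ : ℝ) : Fin 3 → ℝ := ![cos θ, sin θ, 0]

lemma meridianReflection_equatorPoint (θ : ℝ) :
    meridianReflection (equatorPoint θ) = equatorPoint (-θ) :=
  vec3_ext (cos_neg θ).symm (sin_neg θ).symm rfl

lemma equatorPoint_add_congr {θ θ' : ℝ} (h : equatorPoint θ = equatorPoint θ') (ψ : ℝ) :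
    equatorPoint (θ + ψ) = equatorPoint (θ' + ψ) := by
  have hcos : cos θ = cos θ' := congrFun h 0
  have hsin : sin θ = sin θ' := congrFun h 1
  simp only [equatorPoint, cos_add, sin_add, hcos, hsin]

lemma admissiblePairS_equatorPoint (α θ : ℝ) {a b : ℝ} (hab : a ≤ b) :
    AdmissiblePairS α a b (fun t ↦ equatorPoint (θ + cos α * t)) (fun _ ↦ 0) := by
  have hlin : ∀ t, HasDerivAt (fun t ↦ θ + cos α * t) (cos α) t := fun t ↦ by
    simpa using ((hasDerivAt_id t).const_mul (cos α)).const_add θ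
  refine .of_isPrimitiveOn_coord measurable_const (by simp)
    (fun t _ ↦ by simp [mem_euclideanSphere, equatorPoint])
    (.of_hasDerivAt hab (fun t ↦ (hlin t).cos.congr_deriv ?_) ?_)
    (.of_hasDerivAt hab (fun t ↦ (hlin t).sin.congr_deriv ?_) ?_)
    (.of_hasDerivAt hab (fun t ↦ (hasDerivAt_const t 0).congr_deriv ?_) ?_)
  all_goals simp only [equatorPoint, Matrix.cons_val]
  any_goals fun_prop
  all_goals ring

lemma reaches_equatorPoint (α θ : ℝ) {T : ℝ} (hT : 0 ≤ T) :
    Reaches α T (equatorPoint θ) (equatorPoint (θ + cos α * T)) :=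
  ⟨_, _, admissiblePairS_equatorPoint α θ hT, by simp, rfl⟩

/-! ### The flow of the constant control `u = 1` -/

/-- The coordinate along the axis `(sin α, 0, cos α)` of the rotation generated by `u = 1`. -/
noncomputable def axialHeight (α : ℝ) (p : Fin 3 → ℝ) : ℝ := sin α * p 0 + cos α * p 2

/-- The coordinate along `(cos α, 0, -sin α)`. Together with `p 1` it gives the position of `p` in
the plane orthogonal to the axis of the rotation generated by `u = 1`. -/
noncomputable def axialAbscissa (α : ℝ) (p : Fin 3 → ℝ) : ℝ := cos α * p 0 - sin α * p 2

/-- The flow of `F_S + G_S`, the rotation about `(sin α, 0, cos α)` at unit angular speed. -/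
noncomputable def bangFlow (α t : ℝ) (p : Fin 3 → ℝ) : Fin 3 → ℝ :=
  ![sin α * axialHeight α p + cos α * (axialAbscissa α p * cos t - p 1 * sin t),
    axialAbscissa α p * sin t + p 1 * cos t,
    cos α * axialHeight α p - sin α * (axialAbscissa α p * cos t - p 1 * sin t)]

section BangFlow

variable (α t : ℝ) (p : Fin 3 → ℝ)

lemma bangFlow_apply_zero : bangFlow α t p 0 = sin α * axialHeight α p +
    cos α * (axialAbscissa α p * cos t - p 1 * sin t) := rfl

lemma bangFlow_apply_one : bangFlow α t p 1 = axialAbscissa α p * sin t + p 1 * cos t := rfl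

lemma bangFlow_apply_two : bangFlow α t p 2 = cos α * axialHeight α p -
    sin α * (axialAbscissa α p * cos t - p 1 * sin t) := rfl

@[simp] lemma axialHeight_bangFlow : axialHeight α (bangFlow α t p) = axialHeight α p := by
  rw [axialHeight, bangFlow_apply_zero, bangFlow_apply_two]
  linear_combination axialHeight α p * sin_sq_add_cos_sq α

lemma axialAbscissa_bangFlow : axialAbscissa α (bangFlow α t p) =
    axialAbscissa α p * cos t - p 1 * sin t := by
  rw [axialAbscissa, bangFlow_apply_zero, bangFlow_apply_two]
  linear_combination (axialAbscissa α p * cos t - p 1 * sin t) * sin_sq_add_cos_sq α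

lemma apply_zero_eq_axial : p 0 = sin α * axialHeight α p + cos α * axialAbscissa α p := by
  rw [axialHeight, axialAbscissa]
  linear_combination -p 0 * sin_sq_add_cos_sq α

lemma apply_two_eq_axial : p 2 = cos α * axialHeight α p - sin α * axialAbscissa α p := by
  rw [axialHeight, axialAbscissa]
  linear_combination -p 2 * sin_sq_add_cos_sq α

lemma sq_add_sq_add_sq_eq_axial : p 0 ^ 2 + p 1 ^ 2 + p 2 ^ 2 =
    axialHeight α p ^ 2 + axialAbscissa α p ^ 2 + p 1 ^ 2 := by
  rw [axialHeight, axialAbscissa]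
  linear_combination -(p 0 ^ 2 + p 2 ^ 2) * sin_sq_add_cos_sq α

@[simp] lemma bangFlow_zero : bangFlow α 0 p = p := by
  refine vec3_ext ?_ ?_ ?_
  · simpa [bangFlow_apply_zero] using (apply_zero_eq_axial α p).symm
  · simp [bangFlow_apply_one]
  · simpa [bangFlow_apply_two] using (apply_two_eq_axial α p).symm

lemma bangFlow_bangFlow (r : ℝ) : bangFlow α r (bangFlow α t p) = bangFlow α (t + r) p := by
  refine vec3_ext ?_ ?_ ?_
  · simp only [bangFlow_apply_zero, axialHeight_bangFlow, axialAbscissa_bangFlow,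
      bangFlow_apply_one, cos_add, sin_add]
    ring
  · simp only [bangFlow_apply_one, axialAbscissa_bangFlow, cos_add, sin_add]
    ring
  · simp only [bangFlow_apply_two, axialHeight_bangFlow, axialAbscissa_bangFlow,
      bangFlow_apply_one, cos_add, sin_add]
    ring

lemma bangFlow_add_two_pi : bangFlow α (t + 2 * π) p = bangFlow α t p := by
  simp only [bangFlow, cos_add_two_pi, sin_add_two_pi]

lemma bangFlow_sq_add_sq_add_sq : bangFlow α t p 0 ^ 2 + bangFlow α t p 1 ^ 2 +
    bangFlow α t p 2 ^ 2 = p 0 ^ 2 + p 1 ^ 2 + p 2 ^ 2 := by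
  rw [sq_add_sq_add_sq_eq_axial α, sq_add_sq_add_sq_eq_axial α p, axialHeight_bangFlow,
    axialAbscissa_bangFlow, bangFlow_apply_one]
  linear_combination (axialAbscissa α p ^ 2 + p 1 ^ 2) * sin_sq_add_cos_sq t

variable {p} in
lemma bangFlow_mem_euclideanSphere (hp : p ∈ euclideanSphere) :
    bangFlow α t p ∈ euclideanSphere := (bangFlow_sq_add_sq_add_sq α t p).trans hp

lemma hasDerivAt_bangFlow_zero :
    HasDerivAt (fun t ↦ bangFlow α t p 0) (-(cos α * bangFlow α t p 1)) t := by
  refine (((((hasDerivAt_cos t).const_mul (axialAbscissa α p)).sub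
    ((hasDerivAt_sin t).const_mul (p 1))).const_mul (cos α)).const_add _).congr_deriv ?_
  rw [bangFlow_apply_one]
  ring

lemma hasDerivAt_bangFlow_one :
    HasDerivAt (fun t ↦ bangFlow α t p 1) (axialAbscissa α (bangFlow α t p)) t := by
  refine (((hasDerivAt_sin t).const_mul (axialAbscissa α p)).add
    ((hasDerivAt_cos t).const_mul (p 1))).congr_deriv ?_
  rw [axialAbscissa_bangFlow]
  ring

lemma hasDerivAt_bangFlow_two :
    HasDerivAt (fun t ↦ bangFlow α t p 2) (sin α * bangFlow α t p 1) t := by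
  refine (((((hasDerivAt_cos t).const_mul (axialAbscissa α p)).sub
    ((hasDerivAt_sin t).const_mul (p 1))).const_mul (sin α)).const_sub _).congr_deriv ?_
  rw [bangFlow_apply_one]
  ring

end BangFlow

@[fun_prop]
lemma continuous_bangFlow_comp {X : Type*} [TopologicalSpace X] {α : ℝ} {τ : X → ℝ}
    {f : X → Fin 3 → ℝ} (hτ : Continuous τ) (hf : Continuous f) :
    Continuous fun x ↦ bangFlow α (τ x) (f x) := by
  unfold bangFlow axialHeight axialAbscissa
  fun_prop

lemma admissiblePairS_bangFlow {α a b : ℝ} {p : Fin 3 → ℝ} (hp : p ∈ euclideanSphere)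
    (hab : a ≤ b) : AdmissiblePairS α a b (fun t ↦ bangFlow α t p) (fun _ ↦ 1) := by
  refine .of_isPrimitiveOn_coord measurable_const (by simp)
    (fun t _ ↦ bangFlow_mem_euclideanSphere α t hp)
    (.of_hasDerivAt hab (fun t ↦ hasDerivAt_bangFlow_zero α t p) (by fun_prop))
    (.of_hasDerivAt hab (fun t ↦ (hasDerivAt_bangFlow_one α t p).congr_deriv ?_) (by fun_prop))
    (.of_hasDerivAt hab (fun t ↦ (hasDerivAt_bangFlow_two α t p).congr_deriv ?_) (by fun_prop))
  · rw [axialAbscissa, one_mul]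
  · rw [one_mul]

lemma reaches_bangFlow {α t : ℝ} {p : Fin 3 → ℝ} (hp : p ∈ euclideanSphere) (ht : 0 ≤ t) :
    Reaches α t p (bangFlow α t p) :=
  ⟨_, _, admissiblePairS_bangFlow hp ht, bangFlow_zero α p, rfl⟩

namespace AdmissiblePairS

variable {α a b : ℝ} {γ : ℝ → Fin 3 → ℝ} {u : ℝ → ℝ}

lemma isPrimitiveOn_axialHeight (h : AdmissiblePairS α a b γ u) :
    IsPrimitiveOn (fun t ↦ axialHeight α (γ t))
      (fun t ↦ -((1 - u t) * (sin α * cos α * γ t 1))) a b :=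
  ((h.isPrimitiveOn_zero.const_mul (sin α)).add (h.isPrimitiveOn_two.const_mul (cos α))).congr
    (fun _ _ ↦ rfl) fun t _ ↦ by ring

lemma isPrimitiveOn_axialAbscissa (h : AdmissiblePairS α a b γ u) :
    IsPrimitiveOn (fun t ↦ axialAbscissa α (γ t))
      (fun t ↦ -γ t 1 + (1 - u t) * (sin α ^ 2 * γ t 1)) a b :=
  ((h.isPrimitiveOn_zero.const_mul (cos α)).add (h.isPrimitiveOn_two.const_mul (-sin α))).congr
    (fun t _ ↦ by rw [axialAbscissa]; ring)
    fun t _ ↦ by linear_combination γ t 1 * sin_sq_add_cos_sq α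

/-- Variation of constants with respect to the flow of `u = 1`. -/
lemma isPrimitiveOn_bangFlow (h : AdmissiblePairS α a b γ u) (T : ℝ) :
    IsPrimitiveOn (fun t ↦ bangFlow α (T - t) (γ t))
      (fun t ↦ (1 - u t) • -bangFlow α (T - t) (GS α (γ t))) a b := by
  have hcos : IsPrimitiveOn (fun t ↦ cos (T - t)) (fun t ↦ sin (T - t)) a b :=
    .of_hasDerivAt h.hab (fun t ↦ by simpa using ((hasDerivAt_id t).const_sub T).cos)
      (by fun_prop)
  have hsin : IsPrimitiveOn (fun t ↦ sin (T - t)) (fun t ↦ -cos (T - t)) a b :=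
    .of_hasDerivAt h.hab (fun t ↦ by simpa using ((hasDerivAt_id t).const_sub T).sin)
      (by fun_prop)
  have hheight := h.isPrimitiveOn_axialHeight
  have habsc := h.isPrimitiveOn_axialAbscissa
  have hy : IsPrimitiveOn (fun t ↦ γ t 1)
      (fun t ↦ axialAbscissa α (γ t) + (1 - u t) * (sin α * γ t 2)) a b :=
    h.isPrimitiveOn_one.congr (eqOn_refl _ _) fun t _ ↦ by rw [axialAbscissa]; ring
  have hrot := (hcos.mul habsc).add (hsin.mul hy.neg)
  refine .pi h.hab fun i ↦ ?_
  fin_cases i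
  · refine ((hheight.const_mul (sin α)).add (hrot.const_mul (cos α))).congr
      (fun t _ ↦ ?_) (fun t _ ↦ ?_)
    · simp only [Fin.zero_eta, bangFlow_apply_zero]; ring
    · simp [bangFlow_apply_zero, axialHeight, axialAbscissa]; ring
  · refine ((hsin.mul habsc).add (hcos.mul hy)).congr (fun t _ ↦ ?_) (fun t _ ↦ ?_)
    · simp only [Fin.mk_one, bangFlow_apply_one]; ring
    · simp [bangFlow_apply_one, axialAbscissa]; ring
  · refine ((hheight.const_mul (cos α)).add (hrot.const_mul (-sin α))).congr
      (fun t _ ↦ ?_) (fun t _ ↦ ?_)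
    · simp only [Fin.reduceFinMk, bangFlow_apply_two]; ring
    · simp [bangFlow_apply_two, axialHeight, axialAbscissa]; ring

end AdmissiblePairS

/-! ### Comparison with bang arcs -/

section Sphere

variable {p : Fin 3 → ℝ}

lemma abs_apply_le_one_of_mem_euclideanSphere (hp : p ∈ euclideanSphere) (i : Fin 3) :
    |p i| ≤ 1 := by
  have hp' := mem_euclideanSphere.1 hp
  rw [← sq_le_one_iff_abs_le_one]
  fin_cases i <;> dsimp <;> nlinarith [sq_nonneg (p 0), sq_nonneg (p 1), sq_nonneg (p 2)]

lemma eq_equatorPoint_neg_arccos (hp : p ∈ euclideanSphere) (hp1 : p 1 ≤ 0) (hp2 : p 2 = 0) :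
    p = equatorPoint (-arccos (p 0)) := by
  have hp' := mem_euclideanSphere.1 hp
  have hp0 := abs_le.1 (abs_apply_le_one_of_mem_euclideanSphere hp 0)
  refine vec3_ext ?_ ?_ hp2
  · simp [equatorPoint, cos_arccos hp0.1 hp0.2]
  · have hsq : 1 - p 0 ^ 2 = (-p 1) ^ 2 := by rw [hp2] at hp'; linarith
    rw [equatorPoint, Matrix.cons_val_one, Matrix.cons_val_zero, sin_neg, sin_arccos, hsq,
      sqrt_sq (neg_nonneg.2 hp1), neg_neg]

end Sphere

namespace AdmissiblePairS

variable {α a b : ℝ} {γ : ℝ → Fin 3 → ℝ} {u : ℝ → ℝ}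

lemma continuousOn_apply (h : AdmissiblePairS α a b γ u) (i : Fin 3) :
    ContinuousOn (fun t ↦ γ t i) (Icc a b) :=
  (continuous_apply i).comp_continuousOn h.hcont

lemma hasDerivAt_zero (h : AdmissiblePairS α a b γ u) {t : ℝ} (ht : t ∈ Ioo a b) :
    HasDerivAt (fun t ↦ γ t 0) (-(cos α * γ t 1)) t :=
  h.isPrimitiveOn_zero.hasDerivAt ((h.continuousOn_apply 1).const_mul _).neg ht

lemma apply_one_nonpos (h : AdmissiblePairS α a b γ u) (hab : a < b)
    (hy : ∀ t ∈ Ioo a b, γ t 1 < 0) {t : ℝ} (ht : t ∈ Icc a b) : γ t 1 ≤ 0 := by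
  refine le_on_closure (f := fun r ↦ γ r 1) (g := fun _ ↦ 0) (s := Ioo a b)
    (fun r hr ↦ (hy r hr).le) ?_ continuousOn_const ?_
  · rw [closure_Ioo hab.ne]
    exact h.continuousOn_apply 1
  · rwa [closure_Ioo hab.ne]

lemma strictMonoOn_zero (h : AdmissiblePairS α a b γ u) (hc : 0 < cos α)
    (hy : ∀ t ∈ Ioo a b, γ t 1 < 0) : StrictMonoOn (fun t ↦ γ t 0) (Icc a b) := by
  refine strictMonoOn_of_deriv_pos (convex_Icc a b) (h.continuousOn_apply 0) fun t ht ↦ ?_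
  rw [interior_Icc] at ht
  rw [(h.hasDerivAt_zero ht).deriv]
  exact neg_pos.2 (mul_neg_of_pos_of_neg hc (hy t ht))

lemma axialHeight_le (h : AdmissiblePairS α a b γ u) (hs : 0 < sin α) (hc : 0 < cos α)
    (hy : ∀ t ∈ Icc a b, γ t 1 ≤ 0) {t : ℝ} (ht : t ∈ Icc a b) :
    axialHeight α (γ a) ≤ axialHeight α (γ t) := by
  have hincr := h.isPrimitiveOn_axialHeight.mul_sub_le_sub (m := 0) (left_mem_Icc.2 h.hab) ht ht.1
    fun r hr ↦ ?_
  · linarith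
  · have hr' : r ∈ Icc a b := ⟨hr.1, hr.2.trans ht.2⟩
    rw [← mul_neg, ← mul_neg]
    have hu : 0 ≤ 1 - u r := sub_nonneg.2 (abs_le.1 (h.hubound r hr')).2
    have hy' : 0 ≤ -γ r 1 := neg_nonneg.2 (hy r hr')
    positivity

lemma arccos_zero_sub_arccos_zero_le (h : AdmissiblePairS α a b γ u) (hc : 0 < cos α)
    (hy : ∀ t ∈ Ioo a b, γ t 1 < 0) :
    arccos (γ a 0) - arccos (γ b 0) ≤ cos α * (b - a) := by
  refine arccos_sub_arccos_le (f := fun t ↦ γ t 0) (f' := fun t ↦ -(cos α * γ t 1)) h.hab hc.le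
    (h.continuousOn_apply 0) (fun t ↦ h.hasDerivAt_zero)
    (fun t ht ↦ neg_pos.2 (mul_neg_of_pos_of_neg hc (hy t ht))) fun t ht ↦ ?_
  have hsph := h.hsph t (Ioo_subset_Icc_self ht)
  rw [neg_sq, mul_pow]
  exact mul_le_mul_of_nonneg_left (by linarith [mem_euclideanSphere.1 hsph, sq_nonneg (γ t 2)])
    (sq_nonneg _)

end AdmissiblePairS

/-- The radius of the circle described by `p` under the rotation generated by `u = 1`. -/
noncomputable def axialRadius (α : ℝ) (p : Fin 3 → ℝ) : ℝ := √(1 - axialHeight α p ^ 2)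

/-- The time at which the bang arc from `p` reaches the equator, for `p` in the upper hemisphere
with `p 1 ≤ 0` and `axialHeight α p ≤ sin α`. With the polar angle of a bang arc counted from
`-arccos (axialAbscissa α p / axialRadius α p)`, the equator is met at the polar angle with cosine
`cos α * axialHeight α p / (sin α * axialRadius α p)`. -/
noncomputable def bangHitTime (α : ℝ) (p : Fin 3 → ℝ) : ℝ :=
  arccos (axialAbscissa α p / axialRadius α p) -
    arccos (cos α * axialHeight α p / (sin α * axialRadius α p))

section BangHit

variable {α : ℝ} {p : Fin 3 → ℝ}

lemma abs_axialHeight_le_sin (hs : 0 < sin α) (hc : 0 < cos α) (hp : p ∈ euclideanSphere)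
    (hp2 : 0 ≤ p 2) (hh : axialHeight α p ≤ sin α) : |axialHeight α p| ≤ sin α := by
  have hp0 := (abs_le.1 (abs_apply_le_one_of_mem_euclideanSphere hp 0)).1
  refine abs_le.2 ⟨?_, hh⟩
  rw [axialHeight]
  nlinarith [mul_nonneg hc.le hp2, mul_nonneg hs.le (neg_le_iff_add_nonneg.1 hp0)]

lemma axialRadius_pos (hc : 0 < cos α) (hh : |axialHeight α p| ≤ sin α) : 0 < axialRadius α p := by
  refine sqrt_pos.2 ?_
  have := sq_le_sq' (abs_le.1 hh).1 (abs_le.1 hh).2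
  nlinarith [sin_sq_add_cos_sq α, pow_pos hc 2]

lemma axialRadius_sq (hh : |axialHeight α p| ≤ sin α) :
    axialRadius α p ^ 2 = 1 - axialHeight α p ^ 2 := by
  refine sq_sqrt (sub_nonneg.2 ?_)
  have := sq_le_sq' (abs_le.1 hh).1 (abs_le.1 hh).2
  exact this.trans (sin_sq_le_one α)

lemma abs_axialAbscissa_div_axialRadius_le (hp : p ∈ euclideanSphere) (hc : 0 < cos α)
    (hh : |axialHeight α p| ≤ sin α) : |axialAbscissa α p / axialRadius α p| ≤ 1 := by
  rw [abs_div, abs_of_pos (axialRadius_pos hc hh), div_le_one (axialRadius_pos hc hh)]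
  refine abs_le_of_sq_le_sq ?_ (axialRadius_pos hc hh).le
  rw [axialRadius_sq hh]
  nlinarith [sq_add_sq_add_sq_eq_axial α p, mem_euclideanSphere.1 hp, sq_nonneg (p 1)]

lemma abs_cos_mul_axialHeight_div_le (hs : 0 < sin α) (hc : 0 < cos α)
    (hh : |axialHeight α p| ≤ sin α) :
    |cos α * axialHeight α p / (sin α * axialRadius α p)| ≤ 1 := by
  have hr := axialRadius_pos hc hh
  rw [abs_div, abs_of_pos (mul_pos hs hr), div_le_one (mul_pos hs hr)]
  refine abs_le_of_sq_le_sq ?_ (mul_pos hs hr).le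
  rw [mul_pow, mul_pow, axialRadius_sq hh]
  have := sq_le_sq' (abs_le.1 hh).1 (abs_le.1 hh).2
  nlinarith [sin_sq_add_cos_sq α]

lemma axialRadius_mul_cos (hp : p ∈ euclideanSphere) (hc : 0 < cos α)
    (hh : |axialHeight α p| ≤ sin α) :
    axialRadius α p * cos (arccos (axialAbscissa α p / axialRadius α p)) = axialAbscissa α p := by
  have hA := abs_le.1 (abs_axialAbscissa_div_axialRadius_le hp hc hh)
  rw [cos_arccos hA.1 hA.2, mul_div_cancel₀ _ (axialRadius_pos hc hh).ne']

lemma axialRadius_mul_sin (hp : p ∈ euclideanSphere) (hp1 : p 1 ≤ 0) (hc : 0 < cos α)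
    (hh : |axialHeight α p| ≤ sin α) :
    axialRadius α p * sin (arccos (axialAbscissa α p / axialRadius α p)) = -p 1 := by
  have hr := axialRadius_pos hc hh
  have hsq : 1 - (axialAbscissa α p / axialRadius α p) ^ 2 = (-p 1 / axialRadius α p) ^ 2 := by
    rw [div_pow, div_pow, one_sub_div (pow_ne_zero 2 hr.ne'), axialRadius_sq hh]
    congr 1
    linarith [sq_add_sq_add_sq_eq_axial α p, mem_euclideanSphere.1 hp]
  rw [sin_arccos, hsq, sqrt_sq (div_nonneg (neg_nonneg.2 hp1) hr.le), mul_div_cancel₀ _ hr.ne']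

lemma bangFlow_apply_one_polar (hp : p ∈ euclideanSphere) (hp1 : p 1 ≤ 0) (hc : 0 < cos α)
    (hh : |axialHeight α p| ≤ sin α) (t : ℝ) : bangFlow α t p 1 =
      axialRadius α p * sin (t - arccos (axialAbscissa α p / axialRadius α p)) := by
  rw [bangFlow_apply_one, sin_sub]
  linear_combination
    -sin t * axialRadius_mul_cos hp hc hh + cos t * axialRadius_mul_sin hp hp1 hc hh

lemma axialAbscissa_bangFlow_polar (hp : p ∈ euclideanSphere) (hp1 : p 1 ≤ 0) (hc : 0 < cos α)
    (hh : |axialHeight α p| ≤ sin α) (t : ℝ) : axialAbscissa α (bangFlow α t p) =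
      axialRadius α p * cos (t - arccos (axialAbscissa α p / axialRadius α p)) := by
  rw [axialAbscissa_bangFlow, cos_sub]
  linear_combination
    -cos t * axialRadius_mul_cos hp hc hh - sin t * axialRadius_mul_sin hp hp1 hc hh

lemma sin_mul_axialRadius_mul (hs : 0 < sin α) (hc : 0 < cos α)
    (hh : |axialHeight α p| ≤ sin α) :
    sin α * (axialRadius α p * (cos α * axialHeight α p / (sin α * axialRadius α p))) =
      cos α * axialHeight α p := by
  rw [← mul_assoc, mul_div_cancel₀ _ (mul_pos hs (axialRadius_pos hc hh)).ne']

lemma bangFlow_apply_two_polar (hs : 0 < sin α) (hc : 0 < cos α) (hp : p ∈ euclideanSphere)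
    (hp1 : p 1 ≤ 0) (hh : |axialHeight α p| ≤ sin α) (t : ℝ) : bangFlow α t p 2 =
      sin α * axialRadius α p * (cos α * axialHeight α p / (sin α * axialRadius α p) -
        cos (t - arccos (axialAbscissa α p / axialRadius α p))) := by
  rw [apply_two_eq_axial α (bangFlow α t p), axialHeight_bangFlow,
    axialAbscissa_bangFlow_polar hp hp1 hc hh]
  linear_combination -sin_mul_axialRadius_mul hs hc hh

lemma bangHitTime_pos (hs : 0 < sin α) (hc : 0 < cos α) (hp : p ∈ euclideanSphere)
    (hp2 : 0 < p 2) (hh : |axialHeight α p| ≤ sin α) : 0 < bangHitTime α p := by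
  have hr := axialRadius_pos hc hh
  refine sub_pos.2 (arccos_lt_arccos (abs_le.1 (abs_axialAbscissa_div_axialRadius_le hp hc hh)).1
    ?_ (abs_le.1 (abs_cos_mul_axialHeight_div_le hs hc hh)).2)
  rw [apply_two_eq_axial α p] at hp2
  rw [div_lt_div_iff₀ hr (mul_pos hs hr)]
  nlinarith [mul_pos hr hp2]

lemma bangFlow_apply_two_pos (hs : 0 < sin α) (hc : 0 < cos α) (hp : p ∈ euclideanSphere)
    (hp1 : p 1 ≤ 0) (hh : |axialHeight α p| ≤ sin α) {t : ℝ} (ht0 : 0 ≤ t)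
    (ht : t < bangHitTime α p) : 0 < bangFlow α t p 2 := by
  have hv := abs_le.1 (abs_cos_mul_axialHeight_div_le hs hc hh)
  rw [bangFlow_apply_two_polar hs hc hp hp1 hh]
  refine mul_pos (mul_pos hs (axialRadius_pos hc hh)) (sub_pos.2 ?_)
  rw [bangHitTime] at ht
  have hlt := cos_lt_cos_of_nonneg_of_le_pi
    (arccos_nonneg (cos α * axialHeight α p / (sin α * axialRadius α p)))
    ((sub_le_self _ ht0).trans (arccos_le_pi _)) (lt_sub_comm.1 ht)
  rwa [cos_arccos hv.1 hv.2, ← cos_neg, neg_sub] at hlt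

lemma bangFlow_bangHitTime (hs : 0 < sin α) (hc : 0 < cos α) (hp : p ∈ euclideanSphere)
    (hp1 : p 1 ≤ 0) (hh : |axialHeight α p| ≤ sin α) :
    bangFlow α (bangHitTime α p) p = equatorPoint (-arccos (axialHeight α p / sin α)) := by
  have hv := abs_le.1 (abs_cos_mul_axialHeight_div_le hs hc hh)
  have hz : bangFlow α (bangHitTime α p) p 2 = 0 := by
    rw [bangFlow_apply_two_polar hs hc hp hp1 hh, bangHitTime, sub_sub_cancel_left, cos_neg,
      cos_arccos hv.1 hv.2, sub_self, mul_zero]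
  have hx : bangFlow α (bangHitTime α p) p 0 = axialHeight α p / sin α := by
    rw [eq_div_iff hs.ne', ← axialHeight_bangFlow α (bangHitTime α p) p, axialHeight, hz]
    ring
  have hy : bangFlow α (bangHitTime α p) p 1 ≤ 0 := by
    rw [bangFlow_apply_one_polar hp hp1 hc hh, bangHitTime, sub_sub_cancel_left, sin_neg]
    exact mul_nonpos_of_nonneg_of_nonpos (axialRadius_pos hc hh).le
      (neg_nonpos.2 (sin_nonneg_of_nonneg_of_le_pi (arccos_nonneg _) (arccos_le_pi _)))
  rw [← hx]
  exact eq_equatorPoint_neg_arccos (bangFlow_mem_euclideanSphere α _ hp) hy hz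

lemma sq_cos_mul_apply_one_le {H : ℝ} (hp : p ∈ euclideanSphere) (hH : H ≤ axialHeight α p)
    (hpH : sin α * p 0 ≤ H) :
    (cos α * p 1) ^ 2 ≤ cos α ^ 2 * (1 - H ^ 2) - (p 0 - sin α * H) ^ 2 := by
  have hz : (H - sin α * p 0) ^ 2 ≤ (cos α * p 2) ^ 2 := by
    rw [axialHeight] at hH
    exact pow_le_pow_left₀ (sub_nonneg.2 hpH) (by linarith) 2
  have hid : cos α ^ 2 * (1 - H ^ 2) - (p 0 - sin α * H) ^ 2 - (cos α * p 1) ^ 2 =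
      (cos α * p 2) ^ 2 - (H - sin α * p 0) ^ 2 := by
    linear_combination -cos α ^ 2 * mem_euclideanSphere.1 hp +
      (p 0 ^ 2 - H ^ 2) * sin_sq_add_cos_sq α
  linarith

end BangHit

namespace AdmissiblePairS

variable {α a b : ℝ} {γ : ℝ → Fin 3 → ℝ} {u : ℝ → ℝ}

lemma bangHitTime_le (h : AdmissiblePairS α a b γ u) (hs : 0 < sin α) (hc : 0 < cos α)
    (hh : |axialHeight α (γ a)| ≤ sin α) (hy : ∀ t ∈ Ioo a b, γ t 1 < 0)
    (hb : γ b 0 = axialHeight α (γ a) / sin α) : bangHitTime α (γ a) ≤ b - a := by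
  set H := axialHeight α (γ a) with hH
  set r := axialRadius α (γ a)
  have hr0 : 0 < r := axialRadius_pos hc hh
  have hcr : 0 < cos α * r := mul_pos hc hr0
  have hfa : (γ a 0 - sin α * H) / (cos α * r) = axialAbscissa α (γ a) / r := by
    rw [div_eq_div_iff hcr.ne' hr0.ne', hH, axialHeight, axialAbscissa]
    linear_combination -γ a 0 * r * sin_sq_add_cos_sq α
  have hfb : (γ b 0 - sin α * H) / (cos α * r) = cos α * H / (sin α * r) := by
    rw [hb, div_eq_div_iff hcr.ne' (mul_pos hs hr0).ne']
    field_simp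
    linear_combination -H * sin_sq_add_cos_sq α
  have hbound := arccos_sub_arccos_le (f := fun t ↦ (γ t 0 - sin α * H) / (cos α * r))
    (f' := fun t ↦ -(cos α * γ t 1) / (cos α * r)) h.hab zero_le_one
    (((h.continuousOn_apply 0).sub continuousOn_const).div_const _)
    (fun t ht ↦ ((h.hasDerivAt_zero ht).sub_const _).div_const _)
    (fun t ht ↦ div_pos (neg_pos.2 (mul_neg_of_pos_of_neg hc (hy t ht))) hcr) fun t ht ↦ ?_
  · rwa [hfa, hfb, one_mul] at hbound
  have hab := ht.1.trans ht.2
  have ht' := Ioo_subset_Icc_self ht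
  have hx : γ t 0 ≤ H / sin α :=
    hb ▸ ((h.strictMonoOn_zero hc hy).monotoneOn ht' (right_mem_Icc.2 h.hab) ht.2.le)
  have hkey := sq_cos_mul_apply_one_le (h.hsph t ht')
    (h.axialHeight_le hs hc (fun r hr ↦ h.apply_one_nonpos hab hy hr) ht') ((le_div_iff₀' hs).1 hx)
  rw [one_pow, one_mul, div_pow, div_pow, one_sub_div (pow_ne_zero 2 hcr.ne'), neg_sq]
  gcongr
  rwa [mul_pow _ r, axialRadius_sq hh]

theorem exists_bang_then_equator (h : AdmissiblePairS α a b γ u) (hs : 0 < sin α)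
    (hc : 0 < cos α) (hab : a < b) (hy : ∀ t ∈ Ioo a b, γ t 1 < 0) (ha : 0 < γ a 2)
    (hb : γ b 2 = 0) :
    ∃ tL > 0, ∃ θ > -π, ∃ T ≥ 0, tL + T ≤ b - a ∧ θ + cos α * T ≤ 0 ∧
      (∀ τ ∈ Ico 0 tL, 0 < bangFlow α τ (γ a) 2) ∧ bangFlow α tL (γ a) = equatorPoint θ ∧
      γ b = equatorPoint (θ + cos α * T) := by
  have hmema := left_mem_Icc.2 h.hab
  have hmemb := right_mem_Icc.2 h.hab
  have hsa := h.hsph a hmema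
  have hsb := h.hsph b hmemb
  have hyI : ∀ t ∈ Icc a b, γ t 1 ≤ 0 := fun t ↦ h.apply_one_nonpos hab hy
  have hxb : axialHeight α (γ a) ≤ sin α * γ b 0 := by
    simpa [axialHeight, hb] using h.axialHeight_le hs hc hyI hmemb
  have hxb1 := abs_le.1 (abs_apply_le_one_of_mem_euclideanSphere hsb 0)
  have hh : |axialHeight α (γ a)| ≤ sin α :=
    abs_axialHeight_le_sin hs hc hsa ha.le (hxb.trans (mul_le_of_le_one_right hs.le hxb1.2))
  set xL := axialHeight α (γ a) / sin α with hxL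
  have hxLb : xL ≤ γ b 0 := (div_le_iff₀' hs).2 hxb
  have hxaL : γ a 0 < xL := by
    rw [hxL, lt_div_iff₀' hs, axialHeight]
    linarith [mul_pos hc ha]
  have hxL1 : -1 < xL :=
    (abs_le.1 (abs_apply_le_one_of_mem_euclideanSphere hsa 0)).1.trans_lt hxaL
  obtain ⟨ts, hts, hxts⟩ := intermediate_value_Icc h.hab (h.continuousOn_apply 0)
    ⟨hxaL.le, hxLb⟩
  have hbang := (h.mono le_rfl hts.1 hts.2).bangHitTime_le hs hc hh
    (fun t ht ↦ hy t ⟨ht.1, ht.2.trans_le hts.2⟩) hxts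
  have hrun := (h.mono hts.1 hts.2 le_rfl).arccos_zero_sub_arccos_zero_le hc
    fun t ht ↦ hy t ⟨hts.1.trans_lt ht.1, ht.2⟩
  rw [show γ ts 0 = xL from hxts, ← div_le_iff₀' hc] at hrun
  have hend : -arccos xL + cos α * ((arccos xL - arccos (γ b 0)) / cos α) = -arccos (γ b 0) := by
    rw [mul_div_cancel₀ _ hc.ne', neg_add_eq_sub, sub_sub_cancel_left]
  refine ⟨bangHitTime α (γ a), bangHitTime_pos hs hc hsa ha hh, -arccos xL, neg_lt_neg ?_,
    (arccos xL - arccos (γ b 0)) / cos α,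
    div_nonneg (sub_nonneg.2 (antitone_arccos hxLb)) hc.le, by linarith,
    hend.le.trans (neg_nonpos.2 (arccos_nonneg _)),
    fun τ hτ ↦ bangFlow_apply_two_pos hs hc hsa (hyI a hmema) hh hτ.1 hτ.2,
    bangFlow_bangHitTime hs hc hsa (hyI a hmema) hh, ?_⟩
  · rw [← arccos_neg_one]
    exact arccos_lt_arccos le_rfl hxL1 (hxLb.trans hxb1.2)
  · rw [hend]
    exact eq_equatorPoint_neg_arccos hsb (hyI b hmemb) hb

lemma exists_equatorPoint_of_apply_two_eq_zero (h : AdmissiblePairS α a b γ u) (hc : 0 < cos α)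
    (hab : a < b) (hy : ∀ t ∈ Ioo a b, γ t 1 < 0) (ha : γ a 2 = 0) (hb : γ b 2 = 0) :
    ∃ θ, ∃ T > 0, T ≤ b - a ∧ γ a = equatorPoint θ ∧ γ b = equatorPoint (θ + cos α * T) := by
  have hmema := left_mem_Icc.2 h.hab
  have hmemb := right_mem_Icc.2 h.hab
  have hlt := h.strictMonoOn_zero hc hy hmema hmemb hab
  refine ⟨-arccos (γ a 0), (arccos (γ a 0) - arccos (γ b 0)) / cos α, ?_, ?_,
    eq_equatorPoint_neg_arccos (h.hsph a hmema) (h.apply_one_nonpos hab hy hmema) ha, ?_⟩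
  · exact div_pos (sub_pos.2 (arccos_lt_arccos
      (abs_le.1 (abs_apply_le_one_of_mem_euclideanSphere (h.hsph a hmema) 0)).1 hlt
      (abs_le.1 (abs_apply_le_one_of_mem_euclideanSphere (h.hsph b hmemb) 0)).2)) hc
  · exact (div_le_iff₀' hc).2 (h.arccos_zero_sub_arccos_zero_le hc hy)
  · rw [mul_div_cancel₀ _ hc.ne', neg_add_eq_sub, sub_sub_cancel_left]
    exact eq_equatorPoint_neg_arccos (h.hsph b hmemb) (h.apply_one_nonpos hab hy hmemb) hb

lemma strictMonoOn_one (h : AdmissiblePairS α a b γ u) (hs : 0 < sin α) (hsc : sin α < cos α)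
    {r : ℝ} (hr : r ∈ Icc a b) (hr0 : γ r 0 = 1) (hr2 : γ r 2 = 0) :
    StrictMonoOn (fun t ↦ γ t 1) (Icc a b ∩ Icc (r - 1 / 4) (r + 1 / 4)) := by
  rintro t ⟨ht, htr⟩ t' ⟨ht', htr'⟩ htt'
  have hc := hs.trans hsc
  have hbound := h.isPrimitiveOn_one.mul_sub_le_sub (m := cos α / 2) ht ht' htt'.le fun ρ hρ ↦ ?_
  · exact sub_pos.1 ((mul_pos (half_pos hc) (sub_pos.2 htt')).trans_le hbound)
  have hρ' : ρ ∈ Icc a b := ⟨ht.1.trans hρ.1, hρ.2.trans ht'.2⟩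
  have hdist : ‖γ ρ - γ r‖ ≤ 1 / 4 := (h.norm_sub_le hr hρ').trans
    (abs_le.2 ⟨by linarith [htr.1, hρ.1], by linarith [htr'.2, hρ.2]⟩)
  have h0 := abs_le.1 ((norm_le_pi_norm _ 0).trans hdist)
  have h2 := (norm_le_pi_norm _ 2).trans hdist
  rw [Pi.sub_apply, hr0] at h0
  rw [Pi.sub_apply, hr2, sub_zero, norm_eq_abs] at h2
  have hx : cos α * (3 / 4) ≤ cos α * γ ρ 0 :=
    mul_le_mul_of_nonneg_left (by linarith [h0.1]) hc.le
  have hz : |u ρ * (sin α * γ ρ 2)| ≤ 1 * (cos α * (1 / 4)) := by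
    rw [abs_mul, abs_mul, abs_of_pos hs]
    gcongr
    exact h.hubound ρ hρ'
  linarith [(abs_le.1 hz).2]

end AdmissiblePairS

/-! ### Variation of trajectories from the north pole -/

/-- The north pole `(0, 0, 1)`. -/
def northPole : Fin 3 → ℝ := ![0, 0, 1]

/-- First order variations of a trajectory from the north pole which reaches `l`, a point of the
equator, at time `T` by a bang arc: points `Y` with `Y ≈ l + ρ • v` are reached at the same time
`T`, where the horizontal part of `v` is `K` times the positive unit tangent of the equator at `l`.
The arc by which `Y` is reached can be stopped earlier, or prolonged. -/
def HasForwardVariation (α T : ℝ) (l : Fin 3 → ℝ) : Prop :=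
  ∃ K > 0, ∃ v : Fin 3 → ℝ, v 0 = -(K * l 1) ∧ v 1 = K * l 0 ∧ ‖v‖ ≤ 1 ∧
    ∃ δ > 0, ∀ ε > 0, ∃ ρ ∈ Ioo 0 ε, ∃ Y ∈ euclideanSphere, ‖Y - l - ρ • v‖ ≤ ε * ρ ∧
      ∀ τ, -δ ≤ τ → Reaches α (T + τ) northPole (bangFlow α τ Y)

section BangFlow

variable {α : ℝ} {l : Fin 3 → ℝ}

lemma bangFlow_GS_bangFlow_neg_apply_zero (hl : l 2 = 0) (t : ℝ) :
    bangFlow α t (GS α (bangFlow α (-t) l)) 0 =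
      -(cos α * sin α ^ 2 * (1 - cos t) * l 1) := by
  simp only [bangFlow_apply_zero, bangFlow_apply_one, bangFlow_apply_two, axialHeight,
    axialAbscissa, GS_apply_zero, GS_apply_one, GS_apply_two, hl, cos_neg, sin_neg]
  linear_combination -cos α * sin α ^ 2 * l 1 * sin_sq_add_cos_sq t

lemma bangFlow_GS_bangFlow_neg_apply_one (hl : l 2 = 0) (t : ℝ) :
    bangFlow α t (GS α (bangFlow α (-t) l)) 1 = cos α * sin α ^ 2 * (1 - cos t) * l 0 := by
  simp only [bangFlow_apply_one, bangFlow_apply_two, axialHeight,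
    axialAbscissa, GS_apply_zero, GS_apply_one, GS_apply_two, hl, cos_neg, sin_neg]
  linear_combination cos α * sin α ^ 2 * l 0 * sin_sq_add_cos_sq t

lemma norm_bangFlow_GS_le {p : Fin 3 → ℝ} (hp : p ∈ euclideanSphere) (t : ℝ) :
    ‖bangFlow α t (GS α p)‖ ≤ 1 := by
  have hsq : bangFlow α t (GS α p) 0 ^ 2 + bangFlow α t (GS α p) 1 ^ 2 +
      bangFlow α t (GS α p) 2 ^ 2 ≤ 1 := by
    rw [bangFlow_sq_add_sq_add_sq, GS_apply_zero, GS_apply_one, GS_apply_two]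
    nlinarith [mem_euclideanSphere.1 hp, sin_sq_le_one α, sq_nonneg (p 0), sq_nonneg (p 1),
      sq_nonneg (p 2)]
  refine norm_vec3_le ?_ ?_ ?_ <;> rw [← sq_le_one_iff_abs_le_one] <;>
    linarith [sq_nonneg (bangFlow α t (GS α p) 0), sq_nonneg (bangFlow α t (GS α p) 1),
      sq_nonneg (bangFlow α t (GS α p) 2)]

lemma bangFlow_northPole_apply_two_pos (hs : 0 < sin α) (hsc : sin α < cos α) (t : ℝ) :
    0 < bangFlow α t northPole 2 := by
  have hz : bangFlow α t northPole 2 = cos α ^ 2 + sin α ^ 2 * cos t := by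
    simp [bangFlow_apply_two, axialHeight, axialAbscissa, northPole]
    ring
  rw [hz]
  have hsq : sin α ^ 2 < cos α ^ 2 := pow_lt_pow_left₀ hsc hs.le two_ne_zero
  nlinarith [neg_one_le_cos t, sq_nonneg (sin α)]

end BangFlow

namespace AdmissiblePairS

variable {α a b ℓ : ℝ} {γ : ℝ → Fin 3 → ℝ} {u : ℝ → ℝ}

lemma sub_lt_two_pi_of_bangFlow_eq {l : Fin 3 → ℝ} {S : ℝ} (hl : bangFlow α ℓ (γ b) = l)
    (hl2 : l 2 = 0) (hS : ∀ t ∈ Icc S b, γ t = bangFlow α (t - (b + ℓ)) l)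
    (hγ : ∀ t ∈ Icc S b, 0 < γ t 2) (hbang : ∀ τ ∈ Ico 0 ℓ, 0 < bangFlow α τ (γ b) 2) :
    b + ℓ - S < 2 * π := by
  have hper : bangFlow α (-(2 * π)) l = l := by
    rw [← bangFlow_add_two_pi, neg_add_cancel, bangFlow_zero]
  by_contra! hcon
  rcases le_or_gt (b + ℓ - 2 * π) b with hle | hgt
  · have hmem : b + ℓ - 2 * π ∈ Icc S b := ⟨by linarith, hle⟩
    have hpos := hγ _ hmem
    rw [hS _ hmem, sub_sub_cancel_left, hper, hl2] at hpos
    exact hpos.false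
  · have hpos := hbang (ℓ + -(2 * π)) ⟨by linarith, by linarith [pi_pos]⟩
    rw [← bangFlow_bangFlow, hl, hper, hl2] at hpos
    exact hpos.false

lemma continuousOn_neg_bangFlow_GS (h : AdmissiblePairS α a b γ u) (T : ℝ) :
    ContinuousOn (fun t ↦ -bangFlow α (T - t) (GS α (γ t))) (Icc a b) := by
  have hcont : Continuous fun q : ℝ × (Fin 3 → ℝ) ↦ -bangFlow α (T - q.1) (GS α q.2) :=
    (continuous_bangFlow_comp (by fun_prop) ((continuous_GS α).comp continuous_snd)).neg
  exact hcont.comp_continuousOn (f := fun t ↦ (t, γ t)) (continuousOn_id.prodMk h.hcont)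

theorem hasForwardVariation (h : AdmissiblePairS α a b γ u) (hs : 0 < sin α)
    (hsc : sin α < cos α) (ha : γ a = northPole) (hℓ : 0 < ℓ) (hl2 : bangFlow α ℓ (γ b) 2 = 0)
    (hγ : ∀ t ∈ Icc a b, 0 < γ t 2) (hbang : ∀ τ ∈ Ico 0 ℓ, 0 < bangFlow α τ (γ b) 2) :
    HasForwardVariation α (b + ℓ - a) (bangFlow α ℓ (γ b)) := by
  set l := bangFlow α ℓ (γ b) with hl
  set T := b + ℓ
  -- `S` is the last time before which `u` is not almost everywhere equal to `1`
  obtain ⟨S, hS, hconst, hdir⟩ := (h.isPrimitiveOn_bangFlow T).exists_last_direction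
    (intervalIntegrable_const.sub
      (by simpa using h.intervalIntegrable_mul (f := fun _ ↦ 1) continuousOn_const))
    (fun t ht ↦ sub_nonneg.2 (abs_le.1 (h.hubound t ht)).2)
    (h.continuousOn_neg_bangFlow_GS T)
  rw [show T - b = ℓ from add_sub_cancel_left b ℓ, ← hl] at hconst hdir
  have hγS : ∀ t ∈ Icc S b, γ t = bangFlow α (t - T) l := fun t ht ↦ by
    rw [← hconst t ht, bangFlow_bangFlow, sub_add_sub_cancel', sub_self, bangFlow_zero]
  have hSS : S ∈ Icc S b := left_mem_Icc.2 hS.2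
  have haS : a < S := hS.1.lt_of_ne fun haS ↦ by
    have hpos := bangFlow_northPole_apply_two_pos hs hsc (T - S)
    rw [← ha, haS, hconst S hSS, hl2] at hpos
    exact hpos.false
  have hTS : 0 < T - S := by linarith [hS.2]
  have hTS2π : T - S < 2 * π := sub_lt_two_pi_of_bangFlow_eq hl.symm hl2 hγS
    (fun t ht ↦ hγ t ⟨hS.1.trans ht.1, ht.2⟩) hbang
  have hcos : cos (T - S) < 1 := (cos_le_one _).lt_of_ne fun hcos ↦
    hTS.ne' ((cos_eq_one_iff_of_lt_of_lt (by linarith) hTS2π).1 hcos)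
  have hGS : GS α (γ S) = GS α (bangFlow α (-(T - S)) l) := by rw [hγS S hSS, neg_sub]
  refine ⟨cos α * sin α ^ 2 * (1 - cos (T - S)),
    mul_pos (mul_pos (hs.trans hsc) (pow_pos hs 2)) (sub_pos.2 hcos),
    bangFlow α (T - S) (GS α (γ S)), by rw [hGS, bangFlow_GS_bangFlow_neg_apply_zero hl2],
    by rw [hGS, bangFlow_GS_bangFlow_neg_apply_one hl2], norm_bangFlow_GS_le (h.hsph S hS) _,
    ℓ, hℓ, fun ε hε ↦ ?_⟩
  obtain ⟨σ, hσ, ρ, hρ, hle⟩ := hdir haS ε hε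
  have hσb : σ ≤ b := hσ.2.le.trans hS.2
  have hσsph := h.hsph σ ⟨hσ.1.le, hσb⟩
  refine ⟨ρ, hρ, bangFlow α (T - σ) (γ σ), bangFlow_mem_euclideanSphere α _ hσsph, ?_,
    fun τ hτ ↦ ?_⟩
  · rwa [smul_neg, sub_neg_eq_add, ← norm_neg, neg_add', neg_sub] at hle
  · have hreach := (h.reaches le_rfl hσ.1.le hσb).trans
      (reaches_bangFlow hσsph (t := T - σ + τ) (by linarith))
    rwa [ha, ← bangFlow_bangFlow, ← add_assoc, sub_add_sub_cancel'] at hreach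

end AdmissiblePairS

/-! ### Leaving the equator after a forward variation -/

lemma eq_of_apply_zero_eq_of_axialHeight_eq {α : ℝ} (hc : cos α ≠ 0) {p q : Fin 3 → ℝ}
    (hp : p ∈ euclideanSphere) (hq : q ∈ euclideanSphere) (h0 : p 0 = q 0)
    (hheight : axialHeight α p = axialHeight α q) (hp1 : p 1 ≤ 0) (hq1 : q 1 ≤ 0) : p = q := by
  have h2 : p 2 = q 2 := by
    rw [axialHeight, axialHeight, h0] at hheight
    exact mul_left_cancel₀ hc (add_left_cancel hheight)
  have hsq : p 1 ^ 2 = q 1 ^ 2 := by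
    rw [mem_euclideanSphere, h0, h2] at hp
    linarith [mem_euclideanSphere.1 hq]
  refine vec3_ext h0 (neg_injective ?_) h2
  exact (pow_left_inj₀ (neg_nonneg.2 hp1) (neg_nonneg.2 hq1) two_ne_zero).1 (by simpa using hsq)

lemma exists_bangFlow_eq_of_axialHeight_eq {α : ℝ} (hc : cos α ≠ 0) {Y p : Fin 3 → ℝ}
    (hY : Y ∈ euclideanSphere) (hp : p ∈ euclideanSphere) {a b : ℝ} (hab : a ≤ b)
    (hneg : ∀ t ∈ Ico a b, bangFlow α t Y 1 ≤ 0) (hp1 : p 1 ≤ 0)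
    (hheight : axialHeight α p = axialHeight α Y) (ha : bangFlow α a Y 0 ≤ p 0)
    (hb : p 0 < bangFlow α b Y 0) : ∃ t ∈ Ico a b, bangFlow α t Y = p := by
  have hcont : Continuous fun t ↦ bangFlow α t Y 0 := by fun_prop
  obtain ⟨t, ht, hx⟩ := intermediate_value_Ico hab hcont.continuousOn ⟨ha, hb⟩
  exact ⟨t, ht, eq_of_apply_zero_eq_of_axialHeight_eq hc (bangFlow_mem_euclideanSphere α t hY) hp
    hx (by rw [axialHeight_bangFlow, hheight]) (hneg t ht) hp1⟩

lemma abs_apply_sub_apply_le_norm (p q : Fin 3 → ℝ) (i : Fin 3) : |p i - q i| ≤ ‖p - q‖ :=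
  norm_le_pi_norm (p - q) i

lemma abs_axialHeight_sub_le (α : ℝ) (p q : Fin 3 → ℝ) :
    |axialHeight α p - axialHeight α q| ≤ 2 * ‖p - q‖ := by
  have hz : |sin α * (p 0 - q 0)| ≤ 1 * ‖p - q‖ := by
    rw [abs_mul]
    exact mul_le_mul (abs_sin_le_one α) (abs_apply_sub_apply_le_norm p q 0) (abs_nonneg _)
      zero_le_one
  have hx : |cos α * (p 2 - q 2)| ≤ 1 * ‖p - q‖ := by
    rw [abs_mul]
    exact mul_le_mul (abs_cos_le_one α) (abs_apply_sub_apply_le_norm p q 2) (abs_nonneg _)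
      zero_le_one
  calc |axialHeight α p - axialHeight α q|
      = |sin α * (p 0 - q 0) + cos α * (p 2 - q 2)| := by simp only [axialHeight]; ring_nf
    _ ≤ 2 * ‖p - q‖ := (abs_add_le _ _).trans (by linarith)

namespace AdmissiblePairS

variable {α a b η : ℝ} {γ γ' : ℝ → Fin 3 → ℝ} {u u' : ℝ → ℝ}

lemma mul_sub_le_apply_zero_sub (h : AdmissiblePairS α a b γ u) (hc : 0 < cos α) {m t t' : ℝ}
    (ht : t ∈ Icc a b) (ht' : t' ∈ Icc a b) (htt' : t ≤ t') (hy : ∀ r ∈ Icc t t', γ r 1 ≤ -m) :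
    cos α * m * (t' - t) ≤ γ t' 0 - γ t 0 :=
  h.isPrimitiveOn_zero.mul_sub_le_sub ht ht' htt' fun r hr ↦ by
    rw [← mul_neg]
    exact mul_le_mul_of_nonneg_left (le_neg_of_le_neg (hy r hr)) hc.le

lemma exists_axialHeight_eq (h : AdmissiblePairS α (-η) η γ u) (hs : 0 < sin α) (hc : 0 < cos α)
    {m H : ℝ} (hη : 0 ≤ η) (hy : ∀ t ∈ Icc (-η) η, γ t 1 ≤ -m)
    (hzneg : ∀ t ∈ Icc (-η) 0, γ t 2 ≤ 0) (hzpos : ∀ t ∈ Icc 0 η, 0 ≤ γ t 2)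
    (hH : |H - axialHeight α (γ 0)| ≤ sin α * (cos α * m * η)) :
    ∃ t ∈ Icc (-η) η, axialHeight α (γ t) = H := by
  have hle : -η ≤ η := neg_le_self hη
  have h0 : (0 : ℝ) ∈ Icc (-η) η := ⟨neg_nonpos.2 hη, hη⟩
  have hz0 : γ 0 2 = 0 :=
    (hzneg 0 (right_mem_Icc.2 h0.1)).antisymm (hzpos 0 (left_mem_Icc.2 hη))
  have hx := h.mul_sub_le_apply_zero_sub hc (left_mem_Icc.2 hle) h0 h0.1 fun t ht ↦
    hy t ⟨ht.1, ht.2.trans hη⟩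
  have hx' := h.mul_sub_le_apply_zero_sub hc h0 (right_mem_Icc.2 hle) hη fun t ht ↦
    hy t ⟨h0.1.trans ht.1, ht.2⟩
  rw [zero_sub, neg_neg] at hx
  rw [sub_zero] at hx'
  have hz := mul_nonpos_of_nonneg_of_nonpos hc.le (hzneg (-η) (left_mem_Icc.2 h0.1))
  have hz' := mul_nonneg hc.le (hzpos η (right_mem_Icc.2 hη))
  rw [abs_le] at hH
  have hheight0 : axialHeight α (γ 0) = sin α * γ 0 0 := by
    rw [axialHeight, hz0, mul_zero, add_zero]
  refine intermediate_value_Icc hle h.isPrimitiveOn_axialHeight.continuousOn ⟨?_, ?_⟩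
  · change sin α * γ (-η) 0 + cos α * γ (-η) 2 ≤ H
    linarith [mul_le_mul_of_nonneg_left hx hs.le]
  · change H ≤ sin α * γ η 0 + cos α * γ η 2
    linarith [mul_le_mul_of_nonneg_left hx' hs.le]

lemma abs_apply_zero_sub_apply_zero_sub_le (h : AdmissiblePairS α (-η) η γ u)
    (h' : AdmissiblePairS α (-η) η γ' u') {t : ℝ} (ht : t ∈ Icc (-η) η) :
    |(γ' t 0 - γ t 0) - (γ' 0 0 - γ 0 0)| ≤ (‖γ' 0 - γ 0‖ + 2 * η) * η := by
  have hη : 0 ≤ η := (abs_nonneg t).trans (abs_le.2 ht)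
  have h0 : (0 : ℝ) ∈ Icc (-η) η := ⟨neg_nonpos.2 hη, hη⟩
  have hdiff : IsPrimitiveOn (fun r ↦ γ' r 0 - γ r 0) (fun r ↦ -(cos α * (γ' r 1 - γ r 1)))
      (-η) η :=
    (h'.isPrimitiveOn_zero.add h.isPrimitiveOn_zero.neg).congr
      (fun r _ ↦ sub_eq_add_neg _ _) fun r _ ↦ by ring
  have hbound : ∀ r ∈ Icc (-η) η, ‖-(cos α * (γ' r 1 - γ r 1))‖ ≤ ‖γ' 0 - γ 0‖ + 2 * η :=
    fun r hr ↦ by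
      have hr' : |r - 0| ≤ η := by rw [sub_zero]; exact abs_le.2 hr
      calc ‖-(cos α * (γ' r 1 - γ r 1))‖
          ≤ 1 * ‖γ' r - γ r‖ := by
            rw [norm_neg, norm_mul]
            exact mul_le_mul (abs_cos_le_one α) (abs_apply_sub_apply_le_norm _ _ 1)
              (norm_nonneg _) zero_le_one
        _ = ‖(γ' 0 - γ 0) + (γ' r - γ' 0) - (γ r - γ 0)‖ := by rw [one_mul]; congr 1; abel
        _ ≤ ‖γ' 0 - γ 0‖ + ‖γ' r - γ' 0‖ + ‖γ r - γ 0‖ :=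
            (_root_.norm_sub_le _ _).trans (add_le_add_left (norm_add_le _ _) _)
        _ ≤ ‖γ' 0 - γ 0‖ + 2 * η := by linarith [h.norm_sub_le h0 hr, h'.norm_sub_le h0 hr]
  refine (hdiff.norm_sub_le hbound h0 ht).trans
    (mul_le_mul_of_nonneg_left ?_ (by positivity))
  rw [sub_zero]
  exact abs_le.2 ht

/-- `g` is the lead of `Y` over `γ 0`, and within time `τ` of the crossing `γ` attains the axial
height of `Y`; the time `δ` suffices for the bang arc to run through that lead. -/
lemma exists_lt_bangFlow_eq (h : AdmissiblePairS α (-η) η γ u) (hs : 0 < sin α)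
    (hc : 0 < cos α) {m g r τ δ : ℝ} {Y : Fin 3 → ℝ} (hY : Y ∈ euclideanSphere)
    (hy : ∀ t ∈ Icc (-η) η, γ t 1 ≤ -m) (hzneg : ∀ t ∈ Icc (-η) 0, γ t 2 ≤ 0)
    (hzpos : ∀ t ∈ Icc 0 η, 0 ≤ γ t 2) (hτ : 0 ≤ τ) (hτδ : τ ≤ δ) (hδη : δ ≤ η)
    (hr : ‖Y - γ 0‖ ≤ r) (hg : g ≤ Y 0 - γ 0 0) (hrτ : 2 * r ≤ sin α * (cos α * m * τ))
    (hτg : (r + 2 * τ) * τ < g) (hrδ : r + δ ≤ m / 2) (hδ : r + τ ≤ cos α * (m / 2) * δ) :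
    ∃ t ∈ Icc (-η) η, ∃ t' ∈ Ico (-δ) t, bangFlow α t' Y = γ t := by
  have hη : 0 ≤ η := hτ.trans (hτδ.trans hδη)
  have hτη : Icc (-τ) τ ⊆ Icc (-η) η :=
    Icc_subset_Icc (neg_le_neg (hτδ.trans hδη)) (hτδ.trans hδη)
  have h0 : (0 : ℝ) ∈ Icc (-η) η := ⟨neg_nonpos.2 hη, hη⟩
  have h0δ : (0 : ℝ) ∈ Icc (-δ) δ := ⟨neg_nonpos.2 (hτ.trans hτδ), hτ.trans hτδ⟩
  have hγτ := h.mono (neg_le_neg (hτδ.trans hδη)) (neg_le_self hτ) (hτδ.trans hδη)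
  have hbang : AdmissiblePairS α (-δ) δ (fun t ↦ bangFlow α t Y) fun _ ↦ 1 :=
    admissiblePairS_bangFlow hY (h0δ.1.trans h0δ.2)
  obtain ⟨t, ht, hheight⟩ := hγτ.exists_axialHeight_eq hs hc hτ (fun t ht ↦ hy t (hτη ht))
    (fun t ht ↦ hzneg t ⟨(hτη ⟨ht.1, ht.2.trans hτ⟩).1, ht.2⟩)
    (fun t ht ↦ hzpos t ⟨ht.1, (hτη ⟨(neg_nonpos.2 hτ).trans ht.1, ht.2⟩).2⟩)
    (((abs_axialHeight_sub_le α Y _).trans (by linarith)).trans hrτ)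
  have hahead : γ t 0 < bangFlow α t Y 0 := by
    have hdiff := hγτ.abs_apply_zero_sub_apply_zero_sub_le
      (hbang.mono (neg_le_neg hτδ) (neg_le_self hτ) hτδ) ht
    rw [bangFlow_zero] at hdiff
    have hmargin : (‖Y - γ 0‖ + 2 * τ) * τ ≤ (r + 2 * τ) * τ :=
      mul_le_mul_of_nonneg_right (by linarith) hτ
    linarith [neg_le_of_abs_le hdiff]
  have hbangy : ∀ t ∈ Icc (-δ) δ, bangFlow α t Y 1 ≤ -(m / 2) := fun t ht ↦ by
    have hmove := (abs_apply_sub_apply_le_norm _ _ 1).trans (hbang.norm_sub_le h0δ ht)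
    rw [bangFlow_zero, sub_zero] at hmove
    linarith [le_of_abs_le hmove, abs_le.2 ht, hy 0 h0,
      le_of_abs_le ((abs_apply_sub_apply_le_norm Y (γ 0) 1).trans hr)]
  have htδ : t ∈ Icc (-δ) δ := ⟨(neg_le_neg hτδ).trans ht.1, ht.2.trans hτδ⟩
  have hbehind : bangFlow α (-δ) Y 0 ≤ γ t 0 := by
    have hstart := hbang.mul_sub_le_apply_zero_sub hc (left_mem_Icc.2 (h0δ.1.trans h0δ.2)) h0δ
      h0δ.1 fun t ht ↦ hbangy t ⟨ht.1, ht.2.trans h0δ.2⟩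
    have hmove := (abs_apply_sub_apply_le_norm _ _ 0).trans (h.norm_sub_le h0 (hτη ht))
    rw [sub_zero] at hmove
    simp only [bangFlow_zero, zero_sub, neg_neg] at hstart
    linarith [neg_le_of_abs_le hmove, abs_le.2 ht,
      le_of_abs_le ((abs_apply_sub_apply_le_norm Y (γ 0) 0).trans hr)]
  have hm : 0 ≤ m := by linarith [norm_nonneg (Y - γ 0), h0δ.2]
  exact ⟨t, hτη ht, exists_bangFlow_eq_of_axialHeight_eq hc.ne' hY (h.hsph t (hτη ht)) htδ.1
    (fun t' ht' ↦ (hbangy t' ⟨ht'.1, ht'.2.le.trans htδ.2⟩).trans (by linarith))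
    ((hy t (hτη ht)).trans (by linarith)) hheight hbehind hahead⟩

end AdmissiblePairS

lemma norm_le_two_mul_of_norm_sub_smul_le {E : Type*} [NormedAddCommGroup E] [NormedSpace ℝ E]
    {w v : E} {ε ρ : ℝ} (hρ : 0 ≤ ρ) (hε : ε ≤ 1) (hv : ‖v‖ ≤ 1) (h : ‖w - ρ • v‖ ≤ ε * ρ) :
    ‖w‖ ≤ 2 * ρ := by
  have hρv : ‖ρ • v‖ ≤ ρ := by
    rw [norm_smul, norm_of_nonneg hρ]
    exact mul_le_of_le_one_right hρ hv
  linarith [norm_le_norm_sub_add w (ρ • v), mul_le_mul_of_nonneg_right hε hρ]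

lemma eventually_mul_lt (C : ℝ) {D : ℝ} (hD : 0 < D) :
    ∀ᶠ ε in nhdsWithin (0 : ℝ) (Ioi 0), C * ε < D :=
  Filter.Eventually.filter_mono nhdsWithin_le_nhds <|
    ((continuous_const_mul C).tendsto' 0 0 (mul_zero C)).eventually_lt_const hD

namespace AdmissiblePairS

variable {α η T : ℝ} {γ : ℝ → Fin 3 → ℝ} {u : ℝ → ℝ}

theorem not_hasForwardVariation_of_notReachedBefore (h : AdmissiblePairS α (-η) η γ u)
    (hs : 0 < sin α) (hc : 0 < cos α) {m : ℝ} (hη : 0 < η) (hm : 0 < m)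
    (hy : ∀ t ∈ Icc (-η) η, γ t 1 ≤ -m) (hzneg : ∀ t ∈ Icc (-η) 0, γ t 2 ≤ 0)
    (hzpos : ∀ t ∈ Icc 0 η, 0 ≤ γ t 2)
    (hopt : NotReachedBefore α (T + η) northPole (γ η)) : ¬ HasForwardVariation α T (γ 0) := by
  rintro ⟨K, hK, v, hv0, -, hv, δ₀, hδ₀, hvar⟩
  obtain ⟨δ, hδ, hδδ₀, hδη, hδm⟩ : ∃ δ > 0, δ ≤ δ₀ ∧ δ ≤ η ∧ δ ≤ m / 4 :=
    ⟨min δ₀ (min η (m / 4)), by positivity, min_le_left _ _,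
      (min_le_right _ _).trans (min_le_left _ _), (min_le_right _ _).trans (min_le_right _ _)⟩
  have hKm : 0 < K * m / 2 := by positivity
  have hcδ : 0 < cos α * (m / 2) * δ := by positivity
  obtain ⟨C, hC, hCm⟩ : ∃ C > 0, sin α * (cos α * m * C) = 4 :=
    ⟨4 / (sin α * cos α * m), by positivity, by field_simp⟩
  obtain ⟨ε, hε, hε1, hεK, hεg, hεδ, hεm, hεδ'⟩ := (eventually_mem_nhdsWithin.and <|
    (eventually_mul_lt 1 one_pos).and <| (eventually_mul_lt 1 hKm).and <|
    (eventually_mul_lt ((2 + 2 * C) * C) hKm).and <| (eventually_mul_lt C hδ).and <|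
    (eventually_mul_lt 2 (by positivity : 0 < m / 4)).and (eventually_mul_lt (2 + C) hcδ)).exists
  obtain ⟨ρ, ⟨hρ, hρε⟩, Y, hY, hYv, hreach⟩ := hvar ε hε
  have hdist : ‖Y - γ 0‖ ≤ 2 * ρ := norm_le_two_mul_of_norm_sub_smul_le hρ.le (by linarith) hv hYv
  have hgain : K * m / 2 * ρ ≤ Y 0 - γ 0 0 := by
    have hx : |Y 0 - γ 0 0 - ρ * v 0| ≤ ε * ρ := (norm_le_pi_norm _ 0).trans hYv
    have hy0 : K * ρ * γ 0 1 ≤ K * ρ * -m :=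
      mul_le_mul_of_nonneg_left (hy 0 ⟨by linarith, hη.le⟩) (by positivity)
    rw [hv0] at hx
    linarith [neg_le_of_abs_le hx, mul_lt_mul_of_pos_right hεK hρ]
  have hρsmall : ∀ {D E : ℝ}, 0 ≤ D → D * ε < E → D * ρ < E := fun hD hE ↦
    (mul_le_mul_of_nonneg_left hρε.le hD).trans_lt hE
  have hτg : (2 * ρ + 2 * (C * ρ)) * (C * ρ) < K * m / 2 * ρ :=
    calc (2 * ρ + 2 * (C * ρ)) * (C * ρ) = (2 + 2 * C) * C * ρ * ρ := by ring
      _ < K * m / 2 * ρ := mul_lt_mul_of_pos_right (hρsmall (by positivity) hεg) hρ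
  obtain ⟨t, ht, t', ht', heq⟩ := h.exists_lt_bangFlow_eq hs hc (τ := C * ρ) hY hy hzneg hzpos
    (by positivity) (hρsmall hC.le hεδ).le hδη hdist hgain (by linear_combination (-ρ) * hCm) hτg
    (by linarith [hρsmall zero_le_two hεm]) (by linarith [hρsmall (by positivity) hεδ'])
  have hlt := h.notReachedBefore hopt ht (T + t') (heq ▸ hreach t' (by linarith [ht'.1]))
  linarith [ht'.2]

theorem not_hasForwardVariation_of_apply_two_nonneg (h : AdmissiblePairS α 0 η γ u)
    (hs : 0 < sin α) (hc : 0 < cos α) (hη : 0 < η) (h01 : γ 0 1 < 0) (h02 : γ 0 2 = 0)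
    (hz : ∀ t ∈ Icc 0 η, 0 ≤ γ t 2) (hopt : NotReachedBefore α (T + η) northPole (γ η)) :
    ¬ HasForwardVariation α T (γ 0) := by
  obtain ⟨η', hη', hη'η, hη'y⟩ : ∃ η' > 0, η' ≤ η ∧ η' ≤ -γ 0 1 / 2 :=
    ⟨min η (-γ 0 1 / 2), lt_min hη (by linarith), min_le_left _ _, min_le_right _ _⟩
  set θ := -arccos (γ 0 0)
  have h0 : γ 0 = equatorPoint θ :=
    eq_equatorPoint_neg_arccos (h.hsph 0 (left_mem_Icc.2 hη.le)) h01.le h02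
  have hrun := admissiblePairS_equatorPoint α θ (neg_nonpos.2 hη'.le)
  have hext := hrun.trans (h.mono le_rfl hη'.le hη'η) (by simp [h0])
  set Γ : ℝ → Fin 3 → ℝ := fun t ↦ if t ≤ 0 then equatorPoint (θ + cos α * t) else γ t
  have hΓneg : ∀ t ≤ 0, Γ t = equatorPoint (θ + cos α * t) := fun t ht ↦ if_pos ht
  have hΓ0 : Γ 0 = γ 0 := by simp [hΓneg, h0]
  have hΓpos : ∀ t, 0 ≤ t → Γ t = γ t := fun t ht ↦ by
    rcases ht.eq_or_lt with rfl | hpos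
    · exact hΓ0
    · exact if_neg hpos.not_ge
  have h00 : (0 : ℝ) ∈ Icc (-η') η' := ⟨neg_nonpos.2 hη'.le, hη'.le⟩
  rw [← hΓ0]
  refine hext.not_hasForwardVariation_of_notReachedBefore hs hc hη' (m := -γ 0 1 / 2)
    (by linarith) (fun t ht ↦ ?_) (fun t ht ↦ (congrFun (hΓneg t ht.2) 2).le)
    (fun t ht ↦ hΓpos t ht.1 ▸ hz t ⟨ht.1, ht.2.trans hη'η⟩) ?_
  · have hmove := (abs_apply_sub_apply_le_norm _ _ 1).trans (hext.norm_sub_le h00 ht)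
    rw [sub_zero, hΓ0] at hmove
    linarith [le_of_abs_le hmove, abs_le.2 ht]
  · rw [hΓpos η' hη'.le, show T + η' = T + η - (η - η') by ring]
    exact h.notReachedBefore hopt ⟨hη'.le, hη'η⟩

end AdmissiblePairS

theorem not_hasForwardVariation_equatorPoint {α η θ T : ℝ} (hs : 0 < sin α) (hc : 0 < cos α)
    (hη : 0 < η) (hθ : sin θ < 0)
    (hopt : NotReachedBefore α (T + η) northPole (equatorPoint (θ + cos α * η))) :
    ¬ HasForwardVariation α T (equatorPoint θ) := by
  simpa using (admissiblePairS_equatorPoint α θ hη.le).not_hasForwardVariation_of_apply_two_nonneg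
    hs hc hη (by simpa [equatorPoint] using hθ) rfl (fun _ _ ↦ le_rfl) hopt

/-! ### Grazing the equator after a forward variation -/

lemma norm_equatorReflection_sub_equatorPoint (p : Fin 3 → ℝ) (θ : ℝ) :
    ‖equatorReflection p - equatorPoint θ‖ = ‖p - equatorPoint θ‖ := by
  refine congrArg NNReal.toReal (Finset.sup_congr rfl fun i _ ↦ ?_)
  fin_cases i
  · rfl
  · rfl
  · simp [equatorReflection, equatorPoint]

lemma exists_eq_equatorPoint_of_norm_sub_le_one {p : Fin 3 → ℝ} (hp : p ∈ euclideanSphere)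
    (hp1 : 0 ≤ p 1) (hp2 : p 2 = 0) (hdist : ‖p - equatorPoint 0‖ ≤ 1) :
    ∃ θ ∈ Icc 0 (π / 2), θ ≤ 2 * ‖p - equatorPoint 0‖ ∧ p = equatorPoint θ := by
  have hx : |p 0 - 1| ≤ ‖p - equatorPoint 0‖ := by
    simpa [equatorPoint] using abs_apply_sub_apply_le_norm p (equatorPoint 0) 0
  have hy : p 1 ≤ ‖p - equatorPoint 0‖ := by
    simpa [equatorPoint] using (le_abs_self _).trans
      (abs_apply_sub_apply_le_norm p (equatorPoint 0) 1)
  have hp0 : 0 ≤ p 0 := by linarith [neg_le_of_abs_le hx]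
  have hy' := abs_le.1 (abs_apply_le_one_of_mem_euclideanSphere hp 1)
  have hsin : sin (arcsin (p 1)) = p 1 := sin_arcsin hy'.1 hy'.2
  have harcsin0 : 0 ≤ arcsin (p 1) := arcsin_nonneg.2 hp1
  refine ⟨arcsin (p 1), ⟨harcsin0, arcsin_le_pi_div_two _⟩, ?_, vec3_ext ?_ hsin.symm hp2⟩
  · have hjordan := mul_le_sin harcsin0 (arcsin_le_pi_div_two _)
    rw [hsin, div_mul_eq_mul_div, div_le_iff₀ pi_pos] at hjordan
    nlinarith [pi_le_four, norm_nonneg (p - equatorPoint 0)]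
  · change p 0 = cos (arcsin (p 1))
    rw [mem_euclideanSphere, hp2] at hp
    rw [cos_arcsin, eq_comm, ← sqrt_sq hp0]
    congr 1
    linarith

section Grazing

variable {α T δ η : ℝ} {p : Fin 3 → ℝ}

lemma mul_le_bangFlow_apply_one_sub (hp : p ∈ euclideanSphere)
    (hδ : ‖p - equatorPoint 0‖ + δ ≤ cos α / 4) {t : ℝ} (ht : t ∈ Icc 0 δ) :
    cos α / 2 * t ≤ bangFlow α t p 1 - p 1 := by
  have hbang := admissiblePairS_bangFlow (α := α) hp (ht.1.trans ht.2)
  have h0 : (0 : ℝ) ∈ Icc 0 δ := left_mem_Icc.2 (ht.1.trans ht.2)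
  have hincr := hbang.isPrimitiveOn_one.mul_sub_le_sub h0 ht ht.1 (m := cos α / 2) fun r hr ↦ by
    have hr' : r ∈ Icc 0 δ := ⟨hr.1, hr.2.trans ht.2⟩
    have hmove := hbang.norm_sub_le h0 hr'
    rw [bangFlow_zero, sub_zero, abs_of_nonneg hr.1] at hmove
    set q := bangFlow α r p
    have hq : ‖q - equatorPoint 0‖ ≤ cos α / 4 := by
      linarith [norm_sub_le_norm_sub_add_norm_sub q p (equatorPoint 0), hr'.2]
    have hx : |cos α * (q 0 - 1)| ≤ 1 * (cos α / 4) := by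
      rw [abs_mul]
      refine mul_le_mul (abs_cos_le_one α) (le_trans ?_ hq) (abs_nonneg _) zero_le_one
      simpa [equatorPoint] using abs_apply_sub_apply_le_norm q (equatorPoint 0) 0
    have hz : |sin α * q 2| ≤ 1 * (cos α / 4) := by
      rw [abs_mul]
      refine mul_le_mul (abs_sin_le_one α) (le_trans ?_ hq) (abs_nonneg _) zero_le_one
      simpa [equatorPoint] using abs_apply_sub_apply_le_norm q (equatorPoint 0) 2
    linarith [neg_le_of_abs_le hx, le_of_abs_le hz]
  simpa using hincr

lemma exists_bangFlow_apply_two_eq_zero (hs : 0 < sin α) (hc : 0 < cos α)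
    (hp : p ∈ euclideanSphere) (hp1 : 0 ≤ p 1) (hp2 : p 2 ≤ 0) (hδ0 : 0 ≤ δ)
    (hδ : ‖p - equatorPoint 0‖ + δ ≤ cos α / 4) (hz : -p 2 ≤ sin α * cos α * δ ^ 2 / 8) :
    ∃ t ∈ Icc 0 δ, bangFlow α t p 2 = 0 ∧ ∀ r ∈ Icc 0 t, bangFlow α r p 2 ≤ 0 := by
  have hbang := (admissiblePairS_bangFlow (α := α) hp hδ0).isPrimitiveOn_two
  have hy : ∀ r ∈ Icc 0 δ, cos α / 2 * r ≤ bangFlow α r p 1 := fun r hr ↦ by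
    linarith [mul_le_bangFlow_apply_one_sub hp hδ hr]
  have hmono : MonotoneOn (fun t ↦ bangFlow α t p 2) (Icc 0 δ) := fun r hr r' hr' hrr' ↦ by
    have hnonneg := hbang.mul_sub_le_sub hr hr' hrr' (m := 0) fun r'' hr'' ↦ by
      rw [one_mul]
      exact mul_nonneg hs.le ((mul_nonneg (by positivity) (hr.1.trans hr''.1)).trans
        (hy r'' ⟨hr.1.trans hr''.1, hr''.2.trans hr'.2⟩))
    linarith
  have hmid : δ / 2 ∈ Icc 0 δ := ⟨by positivity, by linarith⟩
  have hend : 0 ≤ bangFlow α δ p 2 := by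
    have hhalf := hbang.mul_sub_le_sub hmid (right_mem_Icc.2 hδ0) hmid.2
      (m := sin α * (cos α / 2 * (δ / 2))) fun r hr ↦ by
        rw [one_mul]
        exact mul_le_mul_of_nonneg_left ((mul_le_mul_of_nonneg_left hr.1 (by positivity)).trans
          (hy r ⟨hmid.1.trans hr.1, hr.2⟩)) hs.le
    have hstart := hmono (left_mem_Icc.2 hδ0) hmid hmid.1
    simp only [bangFlow_zero] at hstart
    linarith
  obtain ⟨t, ht, ht0⟩ := intermediate_value_Icc hδ0 hbang.continuousOn
    (show (0 : ℝ) ∈ Icc (bangFlow α 0 p 2) (bangFlow α δ p 2) from ⟨by simpa using hp2, hend⟩)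
  exact ⟨t, ht, ht0, fun r hr ↦ ht0 ▸ hmono ⟨hr.1, hr.2.trans ht.2⟩ ht hr.2⟩

/-- Below the equator, the bang arc has angular speed about the vertical axis at least `cos α`. -/
lemma apply_one_le_of_bangFlow_apply_two_nonpos (hs : 0 ≤ sin α) {t : ℝ} (ht0 : 0 ≤ t)
    (ht : cos α * t ≤ π / 2) (hc : 0 ≤ cos α) (hz : ∀ r ∈ Icc 0 t, bangFlow α r p 2 ≤ 0) :
    p 1 ≤ cos (cos α * t) * bangFlow α t p 1 - sin (cos α * t) * bangFlow α t p 0 := by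
  have hlin : ∀ r, HasDerivAt (fun r ↦ cos α * r) (cos α) r := fun r ↦ by
    simpa using (hasDerivAt_id r).const_mul (cos α)
  have hderiv : ∀ r, HasDerivAt
      (fun r ↦ cos (cos α * r) * bangFlow α r p 1 - sin (cos α * r) * bangFlow α r p 0)
      (cos (cos α * r) * (sin α * -bangFlow α r p 2)) r := fun r ↦ by
    refine (((hlin r).cos.mul (hasDerivAt_bangFlow_one α r p)).sub
      ((hlin r).sin.mul (hasDerivAt_bangFlow_zero α r p))).congr_deriv ?_
    rw [axialAbscissa]
    ring
  have hincr := (IsPrimitiveOn.of_hasDerivAt ht0 hderiv (by fun_prop)).mul_sub_le_sub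
    (left_mem_Icc.2 ht0) (right_mem_Icc.2 ht0) ht0 (m := 0) fun r hr ↦ by
      have hr0 := mul_nonneg hc hr.1
      exact mul_nonneg (cos_nonneg_of_neg_pi_div_two_le_of_le (by linarith [pi_pos])
        ((mul_le_mul_of_nonneg_left hr.2 hc).trans ht))
        (mul_nonneg hs (neg_nonneg.2 (hz r hr)))
  simpa using hincr

lemma exists_reaches_equatorPoint_of_apply_two_nonpos (hs : 0 < sin α) (hc : 0 < cos α)
    (hp : p ∈ euclideanSphere) (hp1 : 0 < p 1) (hp2 : p 2 ≤ 0) (hδ0 : 0 ≤ δ)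
    (hδ : ‖p - equatorPoint 0‖ + δ ≤ cos α / 4) (hz : -p 2 ≤ sin α * cos α * δ ^ 2 / 8) :
    ∃ t, ∃ θ, cos α * t < θ ∧ θ ≤ 2 * (‖p - equatorPoint 0‖ + δ) ∧
      Reaches α t p (equatorPoint θ) := by
  obtain ⟨t, ht, ht0, hneg⟩ := exists_bangFlow_apply_two_eq_zero hs hc hp hp1.le hp2 hδ0 hδ hz
  have hct : 0 ≤ cos α * t := mul_nonneg hc.le ht.1
  have hct1 : cos α * t ≤ 1 := by
    nlinarith [cos_le_one α, ht.2, norm_nonneg (p - equatorPoint 0)]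
  have hangle := apply_one_le_of_bangFlow_apply_two_nonpos hs.le ht.1
    (by linarith [pi_gt_three]) hc.le hneg
  have hy := mul_le_bangFlow_apply_one_sub hp hδ ht
  have hreach := reaches_bangFlow hp (α := α) ht.1
  have hq := bangFlow_mem_euclideanSphere α t hp
  have hmove := (admissiblePairS_bangFlow (α := α) hp hδ0).norm_sub_le (left_mem_Icc.2 hδ0) ht
  rw [bangFlow_zero, sub_zero, abs_of_nonneg ht.1] at hmove
  set q := bangFlow α t p
  have hdist : ‖q - equatorPoint 0‖ ≤ ‖p - equatorPoint 0‖ + δ := by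
    linarith [norm_sub_le_norm_sub_add_norm_sub q p (equatorPoint 0), ht.2]
  have hq1 : 0 ≤ q 1 := by linarith [mul_nonneg (half_pos hc).le ht.1]
  obtain ⟨θ, ⟨hθ0, hθπ⟩, hθ, heq⟩ := exists_eq_equatorPoint_of_norm_sub_le_one hq hq1 ht0
    (by linarith [cos_le_one α])
  refine ⟨t, θ, ?_, by linarith, heq ▸ hreach⟩
  by_contra! hle
  have hsub : sin (θ - cos α * t) ≤ 0 :=
    sin_nonpos_of_nonpos_of_neg_pi_le (by linarith) (by linarith [pi_gt_three])
  rw [heq] at hangle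
  simp only [equatorPoint, Matrix.cons_val] at hangle
  rw [sin_sub] at hsub
  linarith

lemma exists_reaches_equatorPoint (hs : 0 < sin α) (hc : 0 < cos α)
    (hp : p ∈ euclideanSphere) (hp1 : 0 < p 1) (hδ0 : 0 ≤ δ)
    (hδ : ‖p - equatorPoint 0‖ + δ ≤ cos α / 4) (hz : |p 2| ≤ sin α * cos α * δ ^ 2 / 8) :
    ∃ t, ∃ θ, cos α * t < θ ∧ θ ≤ 2 * (‖p - equatorPoint 0‖ + δ) ∧
      Reaches α t p (equatorPoint θ) := by
  rcases le_total (p 2) 0 with hp2 | hp2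
  · exact exists_reaches_equatorPoint_of_apply_two_nonpos hs hc hp hp1 hp2 hδ0 hδ
      ((neg_le_abs _).trans hz)
  · have hnorm := norm_equatorReflection_sub_equatorPoint p 0
    obtain ⟨t, θ, htθ, hθ, hreach⟩ := exists_reaches_equatorPoint_of_apply_two_nonpos hs hc
      (p := equatorReflection p) (by simpa [mem_euclideanSphere, equatorReflection] using hp) hp1
      (neg_nonpos.2 hp2) hδ0 (hnorm ▸ hδ)
      ((neg_neg (p 2)).le.trans ((le_abs_self _).trans hz))
    refine ⟨t, θ, htθ, hnorm ▸ hθ, ?_⟩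
    simpa [equatorReflection_eq_self (p := equatorPoint θ) rfl] using hreach.equatorReflection

theorem not_hasForwardVariation_equatorPoint_zero (hs : 0 < sin α) (hc : 0 < cos α) (hη : 0 < η)
    (hopt : NotReachedBefore α (T + η) northPole (equatorPoint (cos α * η))) :
    ¬ HasForwardVariation α T (equatorPoint 0) := by
  rintro ⟨K, hK, v, -, hv1, hv, δ₀, hδ₀, hvar⟩
  obtain ⟨δ, hδ, hδc, hδη⟩ : ∃ δ > 0, δ ≤ cos α / 8 ∧ δ ≤ cos α * η / 4 :=
    ⟨min (cos α / 8) (cos α * η / 4), by positivity, min_le_left _ _, min_le_right _ _⟩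
  obtain ⟨ε, hε, hε1, hεK, hεδ, hεz⟩ := (eventually_mem_nhdsWithin.and <|
    (eventually_mul_lt 1 one_pos).and <| (eventually_mul_lt 1 hK).and <|
    (eventually_mul_lt 2 hδ).and
      (eventually_mul_lt 2 (by positivity : 0 < sin α * cos α * δ ^ 2 / 8))).exists
  obtain ⟨ρ, ⟨hρ, hρε⟩, Y, hY, hYv, hreach⟩ := hvar ε hε
  have hdist : ‖Y - equatorPoint 0‖ ≤ 2 * ρ :=
    norm_le_two_mul_of_norm_sub_smul_le hρ.le (by linarith) hv hYv
  have hY1 : 0 < Y 1 := by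
    have hy : |Y 1 - equatorPoint 0 1 - ρ * v 1| ≤ ε * ρ := (norm_le_pi_norm _ 1).trans hYv
    simp only [hv1, equatorPoint, Matrix.cons_val, sin_zero, cos_zero] at hy
    linarith [neg_le_of_abs_le hy, mul_lt_mul_of_pos_right hεK hρ]
  have hY2 : |Y 2| ≤ 2 * ρ := by
    simpa [equatorPoint] using (abs_apply_sub_apply_le_norm Y (equatorPoint 0) 2).trans hdist
  obtain ⟨t, θ, htθ, hθ, hreach'⟩ := exists_reaches_equatorPoint hs hc hY hY1 hδ.le
    (by linarith) (by linarith)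
  have hpole := hreach 0 (by linarith)
  rw [add_zero, bangFlow_zero] at hpole
  have hrest := reaches_equatorPoint α θ (T := η - θ / cos α)
    (sub_nonneg.2 ((div_le_iff₀' hc).2 (by linarith)))
  rw [show θ + cos α * (η - θ / cos α) = cos α * η by field_simp; ring] at hrest
  have hle := hopt _ ((hpole.trans hreach').trans hrest)
  linarith [(lt_div_iff₀' hc).2 htθ]

end Grazing

/-! ### Continuation past the equator -/

namespace AdmissiblePairS

variable {α b T : ℝ} {γ : ℝ → Fin 3 → ℝ} {u : ℝ → ℝ}

theorem not_hasForwardVariation_of_apply_two_eq_zero (h : AdmissiblePairS α 0 b γ u)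
    (hs : 0 < sin α) (hc : 0 < cos α) (hb : 0 < b) (h01 : γ 0 1 < 0) (h02 : γ 0 2 = 0)
    (hy : ∀ t ∈ Ioo 0 b, γ t 1 < 0) (hb2 : γ b 2 = 0)
    (hopt : NotReachedBefore α (T + b) northPole (γ b)) : ¬ HasForwardVariation α T (γ 0) := by
  obtain ⟨θ, T', hT', hT'b, h0, hend⟩ := h.exists_equatorPoint_of_apply_two_eq_zero hc hb hy h02 hb2
  rw [h0] at h01 ⊢
  exact not_hasForwardVariation_equatorPoint hs hc hT' h01
    fun T'' hreach ↦ by linarith [hopt T'' (hend ▸ hreach)]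

theorem not_hasForwardVariation_of_apply_one_neg (h : AdmissiblePairS α 0 b γ u)
    (hs : 0 < sin α) (hc : 0 < cos α) (hb : 0 < b) (h01 : γ 0 1 < 0) (h02 : γ 0 2 = 0)
    (hb2 : γ b 2 = 0) (hopt : NotReachedBefore α (T + b) northPole (γ b)) :
    ¬ HasForwardVariation α T (γ 0) := by
  obtain ⟨η, hη, hηb, hη1⟩ : ∃ η > 0, η ≤ b ∧ η ≤ -γ 0 1 / 2 :=
    ⟨min b (-γ 0 1 / 2), lt_min hb (by linarith), min_le_left _ _, min_le_right _ _⟩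
  have hopt' : ∀ t ∈ Icc 0 η, NotReachedBefore α (T + t) northPole (γ t) := fun t ht ↦ by
    rw [show T + t = T + b - (b - t) by ring]
    exact h.notReachedBefore hopt ⟨ht.1, ht.2.trans hηb⟩
  have hbefore := h.mono le_rfl hη.le hηb
  by_cases hreturn : ∃ t ∈ Ioc 0 η, γ t 2 = 0
  · obtain ⟨t, ht, ht2⟩ := hreturn
    refine (hbefore.mono le_rfl ht.1.le ht.2).not_hasForwardVariation_of_apply_two_eq_zero hs hc
      ht.1 h01 h02 (fun r hr ↦ ?_) ht2 (hopt' t ⟨ht.1.le, ht.2⟩)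
    have hmove := (abs_apply_sub_apply_le_norm _ _ 1).trans
      (h.norm_sub_le (left_mem_Icc.2 hb.le) (t' := r)
        ⟨hr.1.le, hr.2.le.trans (ht.2.trans hηb)⟩)
    rw [sub_zero, abs_of_pos hr.1] at hmove
    linarith [le_of_abs_le hmove, hr.2, ht.2]
  push Not at hreturn
  have hnonneg : ∀ f : ℝ → ℝ, ContinuousOn f (Icc 0 η) → f 0 = 0 → 0 < f η →
      (∀ t ∈ Ioc 0 η, f t ≠ 0) → ∀ t ∈ Icc 0 η, 0 ≤ f t := fun f hf hf0 hfη hne t ht ↦ by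
    rcases ht.1.eq_or_lt with rfl | htpos
    · exact hf0.ge
    · exact (pos_of_ne_zero_of_pos_right hf hfη hne t ⟨htpos, ht.2⟩).le
  rcases lt_or_gt_of_ne (hreturn η (right_mem_Ioc.2 hη)) with hneg | hpos
  · have hrefl := hbefore.comp_equatorReflection
    have hrefl0 := equatorReflection_eq_self h02
    rw [← hrefl0]
    refine hrefl.not_hasForwardVariation_of_apply_two_nonneg hs hc hη h01 (by rwa [hrefl0])
      (hnonneg (fun t ↦ -γ t 2) (hbefore.continuousOn_apply 2).neg (by rwa [neg_eq_zero])
        (neg_pos.2 hneg) fun t ht ↦ neg_ne_zero.2 (hreturn t ht)) ?_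
    rw [show T + η = T + b - (b - η) by ring]
    exact h.comp_equatorReflection.notReachedBefore
      ((equatorReflection_eq_self hb2).symm ▸ hopt) ⟨hη.le, hηb⟩
  · exact hbefore.not_hasForwardVariation_of_apply_two_nonneg hs hc hη h01 h02
      (hnonneg (fun t ↦ γ t 2) (hbefore.continuousOn_apply 2) h02 hpos hreturn)
      (hopt' η (right_mem_Icc.2 hη.le))

end AdmissiblePairS

lemma equatorPoint_neg_eq {θ ψ : ℝ} (h : equatorPoint 0 = equatorPoint (θ + ψ)) :
    equatorPoint (-θ) = equatorPoint ψ := by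
  have hadd := equatorPoint_add_congr h (-θ)
  rwa [zero_add, add_neg_cancel_comm] at hadd

lemma eq_bangFlow_pi_equatorPoint_zero {α : ℝ} {p : Fin 3 → ℝ} (hp : p ∈ euclideanSphere)
    (hp1 : p 1 = 0) (hp2 : p 2 ≠ 0) (hh : axialHeight α p = sin α) :
    p = bangFlow α π (equatorPoint 0) := by
  have hq : axialHeight α (equatorPoint 0) = sin α := by simp [axialHeight, equatorPoint]
  have hq' : axialAbscissa α (equatorPoint 0) = cos α := by simp [axialAbscissa, equatorPoint]
  have habsc : axialAbscissa α p ^ 2 = cos α ^ 2 := by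
    have hsq := mem_euclideanSphere.1 hp
    rw [sq_add_sq_add_sq_eq_axial α, hh, hp1] at hsq
    linear_combination hsq - sin_sq_add_cos_sq α
  rcases sq_eq_sq_iff_eq_or_eq_neg.1 habsc with hcos | hcos
  · refine absurd ?_ hp2
    rw [apply_two_eq_axial α p, hh, hcos]
    ring
  · refine vec3_ext ?_ ?_ ?_
    · rw [apply_zero_eq_axial α p, bangFlow_apply_zero, hh, hcos, hq, hq', cos_pi, sin_pi]
      ring
    · rw [hp1, bangFlow_apply_one, sin_pi, cos_pi]
      simp [equatorPoint]
    · rw [apply_two_eq_axial α p, bangFlow_apply_two, hh, hcos, hq, hq', cos_pi, sin_pi]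
      ring

namespace AdmissiblePairS

variable {α a b T TB : ℝ} {γ : ℝ → Fin 3 → ℝ} {u : ℝ → ℝ}

theorem not_hasForwardVariation_of_apply_one_eq_zero (h : AdmissiblePairS α 0 b γ u)
    (hs : 0 < sin α) (hc : 0 < cos α) (hb : 0 < b) (h0 : γ 0 = equatorPoint 0)
    (hy : ∀ t ∈ Ioo 0 b, 0 < γ t 1) (hb1 : γ b 1 = 0) (hb2 : 0 < γ b 2)
    (hB : Reaches α TB northPole (bangFlow α π (equatorPoint 0))) (hTB : TB < T)
    (hopt : NotReachedBefore α (T + b) northPole (γ b)) :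
    ¬ HasForwardVariation α T (equatorPoint 0) := by
  have hsph : γ b ∈ euclideanSphere := h.hsph b (right_mem_Icc.2 hb.le)
  have hrev := h.comp_meridianReflection b
  rw [sub_self, sub_zero] at hrev
  obtain ⟨tL, htL, θ, -, TR, hTR, hle, -, -, hbang, hend⟩ := hrev.exists_bang_then_equator hs hc hb
    (fun t ht ↦ neg_lt_zero.2 (hy _ ⟨sub_pos.2 ht.2, sub_lt_self b ht.1⟩))
    (by simpa [meridianReflection] using hb2) (by simp [meridianReflection, h0, equatorPoint])
  rw [sub_zero, meridianReflection_eq_self hb1] at hbang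
  rw [sub_self, h0, meridianReflection_equatorPoint, neg_zero] at hend
  rcases hTR.lt_or_eq with hTR | rfl
  · have hreturn := (reaches_bangFlow (α := α) hsph htL.le).meridianReflection
    rw [hbang, meridianReflection_equatorPoint, equatorPoint_neg_eq hend,
      meridianReflection_eq_self hb1] at hreturn
    exact not_hasForwardVariation_equatorPoint_zero hs hc hTR
      (hopt.of_reaches hreturn (by linarith))
  · have hheight : axialHeight α (γ b) = sin α := by
      rw [← axialHeight_bangFlow α tL, hbang, ← add_zero θ, ← mul_zero (cos α), ← hend]
      simp [axialHeight, equatorPoint]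
    rw [eq_bangFlow_pi_equatorPoint_zero hsph hb1 hb2.ne' hheight] at hopt
    linarith [hopt TB hB]

theorem not_hasForwardVariation_of_apply_one_pos (h : AdmissiblePairS α 0 b γ u)
    (hs : 0 < sin α) (hc : 0 < cos α) (hb : 0 < b) (h0 : γ 0 = equatorPoint 0)
    (hy : ∀ t ∈ Ioo 0 b, 0 < γ t 1) (hb2 : γ b 2 = 0)
    (hopt : NotReachedBefore α (T + b) northPole (γ b)) :
    ¬ HasForwardVariation α T (equatorPoint 0) := by
  have hrev := h.comp_meridianReflection b
  rw [sub_self, sub_zero] at hrev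
  obtain ⟨θ, η, hη, hηb, hstart, hend⟩ := hrev.exists_equatorPoint_of_apply_two_eq_zero hc hb
    (fun t ht ↦ neg_lt_zero.2 (hy _ ⟨sub_pos.2 ht.2, sub_lt_self b ht.1⟩))
    (by simpa [meridianReflection] using hb2) (by simp [meridianReflection, h0, equatorPoint])
  rw [sub_self, h0, meridianReflection_equatorPoint, neg_zero] at hend
  have hγb : γ b = equatorPoint (cos α * η) := by
    rw [← equatorPoint_neg_eq hend, ← meridianReflection_equatorPoint, ← hstart, sub_zero,
      meridianReflection_meridianReflection]
  exact not_hasForwardVariation_equatorPoint_zero hs hc hη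
    fun T'' hreach ↦ by linarith [hopt T'' (hγb ▸ hreach)]

lemma exists_first_apply_one_eq_zero (h : AdmissiblePairS α 0 b γ u) (hs : 0 < sin α)
    (hsc : sin α < cos α) (h0 : γ 0 = equatorPoint 0) {q : ℝ} (hq : q ∈ Ioc 0 b)
    (hq1 : γ q 1 ≤ 0) : ∃ τ ∈ Ioc 0 q, γ τ 1 = 0 ∧ ∀ t ∈ Ioo 0 τ, 0 < γ t 1 := by
  have h00 : γ 0 0 = 1 := by simp [h0, equatorPoint]
  have h01 : γ 0 1 = 0 := by simp [h0, equatorPoint]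
  have h02 : γ 0 2 = 0 := by simp [h0, equatorPoint]
  have hmono := h.strictMonoOn_one hs hsc (left_mem_Icc.2 h.hab) h00 h02
  have hpos : ∀ t ∈ Ioc 0 b, t ≤ 1 / 4 → 0 < γ t 1 := fun t ht ht4 ↦ by
    rw [← h01]
    exact hmono ⟨left_mem_Icc.2 h.hab, by norm_num, by norm_num⟩
      ⟨Ioc_subset_Icc_self ht, by linarith [ht.1], by linarith⟩ ht.1
  have hq4 : 1 / 4 < q := lt_of_not_ge fun hq4 ↦ hq1.not_gt (hpos q hq hq4)
  obtain ⟨τ, hτ, hτ1, hτpos⟩ := exists_first_zero hq4.le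
    ((h.continuousOn_apply 1).mono (Icc_subset_Icc (by norm_num) hq.2))
    (hpos _ ⟨by norm_num, hq4.le.trans hq.2⟩ le_rfl) hq1
  refine ⟨τ, ⟨one_div_pos.2 four_pos |>.trans hτ.1, hτ.2⟩, hτ1, fun t ht ↦ ?_⟩
  rcases le_total t (1 / 4) with ht4 | ht4
  · exact hpos t ⟨ht.1, ht.2.le.trans (hτ.2.trans hq.2)⟩ ht4
  · exact hτpos t ⟨ht4, ht.2⟩

lemma exists_last_apply_one_eq_zero (h : AdmissiblePairS α a b γ u) (hs : 0 < sin α)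
    (hsc : sin α < cos α) (hab : a < b) (ha1 : γ a 1 = 0)
    (hb : γ b 1 < 0 ∨ γ b = equatorPoint 0) :
    ∃ t ∈ Ico a b, γ t 1 = 0 ∧ ∀ t' ∈ Ioo t b, γ t' 1 < 0 := by
  obtain ⟨p, hp, hneg⟩ : ∃ p ∈ Ioc a b, γ p 1 < 0 ∧ ∀ t ∈ Ico p b, γ t 1 < 0 := by
    rcases hb with hb | hb
    · exact ⟨b, right_mem_Ioc.2 hab, hb, fun t ht ↦ (ht.1.not_gt ht.2).elim⟩
    have hb0 : γ b 0 = 1 := by simp [hb, equatorPoint]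
    have hb1 : γ b 1 = 0 := by simp [hb, equatorPoint]
    have hb2 : γ b 2 = 0 := by simp [hb, equatorPoint]
    have hmono := h.strictMonoOn_one hs hsc (right_mem_Icc.2 h.hab) hb0 hb2
    have hneg : ∀ t ∈ Ico a b, b - 1 / 4 ≤ t → γ t 1 < 0 := fun t ht ht4 ↦ by
      rw [← hb1]
      exact hmono ⟨Ico_subset_Icc_self ht, ht4, by linarith [ht.2]⟩
        ⟨right_mem_Icc.2 h.hab, by norm_num, by norm_num⟩ ht.2
    have ha4 : a < b - 1 / 4 :=
      lt_of_not_ge fun ha4 ↦ ha1.not_lt (hneg a (left_mem_Ico.2 hab) ha4)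
    exact ⟨b - 1 / 4, ⟨ha4, by norm_num⟩, hneg _ ⟨ha4.le, by norm_num⟩ le_rfl,
      fun t ht ↦ hneg t ⟨ha4.le.trans ht.1, ht.2⟩ ht.1⟩
  obtain ⟨t, ht, ht1, htneg⟩ := exists_last_zero hp.1.le
    ((h.continuousOn_apply 1).mono (Icc_subset_Icc_right hp.2)) ha1.ge hneg.1
  refine ⟨t, ⟨ht.1, ht.2.trans_le hp.2⟩, ht1, fun t' ht' ↦ ?_⟩
  rcases le_total t' p with htp | htp
  · exact htneg t' ⟨ht'.1, htp⟩
  · exact hneg.2 t' ⟨htp, ht'.2⟩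

theorem not_hasForwardVariation_of_eq_equatorPoint_zero (h : AdmissiblePairS α 0 b γ u)
    (hs : 0 < sin α) (hsc : sin α < cos α) (hb : 0 < b) (h0 : γ 0 = equatorPoint 0)
    (hb2 : γ b 2 = 0) (hB : Reaches α TB northPole (bangFlow α π (equatorPoint 0)))
    (hTB : TB < T) (hopt : NotReachedBefore α (T + b) northPole (γ b)) :
    ¬ HasForwardVariation α T (equatorPoint 0) := by
  have hc : 0 < cos α := hs.trans hsc
  by_cases hy : ∀ t ∈ Ioo 0 b, 0 < γ t 1
  · exact h.not_hasForwardVariation_of_apply_one_pos hs hc hb h0 hy hb2 hopt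
  push Not at hy
  obtain ⟨q, hq, hq1⟩ := hy
  obtain ⟨τ, hτ, hτ1, hypos⟩ :=
    h.exists_first_apply_one_eq_zero hs hsc h0 (Ioo_subset_Ioc_self hq) hq1
  have hτb : τ ≤ b := hτ.2.trans hq.2.le
  have hbefore := h.mono le_rfl hτ.1.le hτb
  have htime : T + b - (b - τ) = T + τ := by ring
  have hoptτ := htime ▸ h.notReachedBefore hopt ⟨hτ.1.le, hτb⟩
  rcases lt_trichotomy (γ τ 2) 0 with hneg | hzero | hpos
  · have hoptτ' := htime ▸ h.comp_equatorReflection.notReachedBefore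
      ((equatorReflection_eq_self hb2).symm ▸ hopt) ⟨hτ.1.le, hτb⟩
    exact hbefore.comp_equatorReflection.not_hasForwardVariation_of_apply_one_eq_zero hs hc hτ.1
      ((equatorReflection_eq_self (by simp [h0, equatorPoint])).trans h0) hypos hτ1
      (neg_pos.2 hneg) hB hTB hoptτ'
  · exact hbefore.not_hasForwardVariation_of_apply_one_pos hs hc hτ.1 h0 hypos hzero hoptτ
  · exact hbefore.not_hasForwardVariation_of_apply_one_eq_zero hs hc hτ.1 h0 hypos hτ1 hpos hB hTB
      hoptτ

end AdmissiblePairS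

/-! ### Trajectories from the north pole -/

lemma apply_one_neg_or_eq_equatorPoint_zero_or_halfTurn {p : Fin 3 → ℝ} (hp : p ∈ euclideanSphere)
    (hp2 : p 2 = 0) : (p 1 < 0 ∨ p = equatorPoint 0) ∨
      (halfTurn p 1 < 0 ∨ halfTurn p = equatorPoint 0) := by
  rcases lt_trichotomy (p 1) 0 with hneg | hzero | hpos
  · exact .inl (.inl hneg)
  · have hsq : p 0 ^ 2 = 1 := by simpa [hzero, hp2] using mem_euclideanSphere.1 hp
    rcases sq_eq_one_iff.1 hsq with hone | hone
    · exact .inl (.inr (vec3_ext (by simp [hone, equatorPoint]) (by simp [hzero, equatorPoint])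
        (by simp [hp2, equatorPoint])))
    · exact .inr (.inr (vec3_ext (by simp [hone, halfTurn, equatorPoint])
        (by simp [hzero, halfTurn, equatorPoint]) (by simp [hp2, halfTurn, equatorPoint])))
  · exact .inr (.inl (neg_lt_zero.2 hpos))

namespace AdmissiblePairS

variable {α a b : ℝ} {γ : ℝ → Fin 3 → ℝ} {u : ℝ → ℝ}

theorem hasForwardVariation_of_notReachedBefore (h : AdmissiblePairS α a b γ u) (hs : 0 < sin α)
    (hsc : sin α < cos α) (ha : γ a = northPole) (hab : a < b) (hb2 : γ b 2 = 0)
    (hpos : ∀ t ∈ Ico a b, 0 < γ t 2) (hb : γ b 1 < 0 ∨ γ b = equatorPoint 0)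
    (hopt : NotReachedBefore α (b - a) northPole (γ b)) :
    HasForwardVariation α (b - a) (γ b) ∧
      ∃ t ∈ Ico a b, γ t 1 = 0 ∧ bangFlow α (b - t) (γ t) = γ b := by
  have hc : 0 < cos α := hs.trans hsc
  have ha1 : γ a 1 = 0 := by simp [ha, northPole]
  obtain ⟨t, ht, ht1, hneg⟩ := h.exists_last_apply_one_eq_zero hs hsc hab ha1 hb
  obtain ⟨tL, htL, θ, hθ, T, hT, hle, hθT, hbangpos, hbang, hend⟩ :=
    (h.mono ht.1 ht.2.le le_rfl).exists_bang_then_equator hs hc ht.2 hneg (hpos t ht) hb2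
  have htime : tL + T = b - t := by
    have hreach := ((h.reaches le_rfl ht.1 ht.2.le).trans (reaches_bangFlow
      (h.hsph t (Ico_subset_Icc_self ht)) htL.le)).trans
      (hbang ▸ reaches_equatorPoint α θ hT)
    rw [ha, ← hend] at hreach
    linarith [hopt _ hreach]
  have hvar := (h.mono le_rfl ht.1 ht.2.le).hasForwardVariation hs hsc ha htL
    (by simp [hbang, equatorPoint]) (fun t' ht' ↦ hpos t' ⟨ht'.1, ht'.2.trans_lt ht.2⟩) hbangpos
  rw [hbang] at hvar
  rcases hT.lt_or_eq with hT | rfl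
  -- here the comparison trajectory is optimal, too, and ends with a run along the equator
  · refine absurd hvar (not_hasForwardVariation_equatorPoint hs hc hT
      (sin_neg_of_neg_of_neg_pi_lt ?_ hθ) ?_)
    · linarith [mul_pos hc hT]
    · rwa [← hend, show t + tL - a + T = b - a by linarith]
  · rw [mul_zero, add_zero] at hend
    obtain rfl : tL = b - t := by linarith
    rw [← hend] at hvar hbang
    exact ⟨by rwa [show t + (b - t) - a = b - a by ring] at hvar, t, ht, ht1, hbang⟩

theorem apply_two_ne_zero_of_first_hit (h : AdmissiblePairS α a b γ u) (hs : 0 < sin α)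
    (hsc : sin α < cos α) (ha : γ a = northPole) {r : ℝ} (hr : r ∈ Ioo a b) (hr2 : γ r 2 = 0)
    (hpos : ∀ t ∈ Ico a r, 0 < γ t 2) (hcase : γ r 1 < 0 ∨ γ r = equatorPoint 0)
    (hopt : NotReachedBefore α (b - a) northPole (γ b)) : γ b 2 ≠ 0 := by
  intro hb2
  have hc : 0 < cos α := hs.trans hsc
  have hbefore := h.mono le_rfl hr.1.le hr.2.le
  have hoptr := h.notReachedBefore hopt (Ioo_subset_Icc_self hr)
  rw [sub_sub_sub_cancel_left] at hoptr
  obtain ⟨hvar, t, ht, ht1, hbang⟩ :=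
    hbefore.hasForwardVariation_of_notReachedBefore hs hsc ha hr.1 hr2 hpos hcase hoptr
  have hafter := (h.mono hr.1.le hr.2.le le_rfl).comp_add_right r
  rw [sub_self] at hafter
  have hopt' : NotReachedBefore α (r - a + (b - r)) northPole (γ (b - r + r)) := by
    rwa [sub_add_cancel, add_comm, sub_add_sub_cancel]
  have hγr : γ (0 + r) = γ r := by rw [zero_add]
  have hb2' : γ (b - r + r) 2 = 0 := by rwa [sub_add_cancel]
  rcases hcase with hneg | hpole
  · exact hafter.not_hasForwardVariation_of_apply_one_neg hs hc (sub_pos.2 hr.2) (by rwa [hγr])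
      (by rwa [hγr]) hb2' hopt' (by rwa [hγr])
  · have hheight : axialHeight α (γ t) = sin α := by
      rw [← axialHeight_bangFlow α (r - t), hbang, hpole]
      simp [axialHeight, equatorPoint]
    have hreach := hbefore.reaches le_rfl ht.1 ht.2.le
    rw [ha, eq_bangFlow_pi_equatorPoint_zero (hbefore.hsph t (Ico_subset_Icc_self ht)) ht1
      (hpos t ht).ne' hheight] at hreach
    exact hafter.not_hasForwardVariation_of_eq_equatorPoint_zero hs hsc (sub_pos.2 hr.2)
      (hγr.trans hpole) hb2' hreach (sub_lt_sub_right ht.2 a) hopt' (hpole ▸ hvar)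

theorem apply_two_ne_zero (h : AdmissiblePairS α a b γ u) (hs : 0 < sin α)
    (hsc : sin α < cos α) (ha : γ a = northPole) {t : ℝ} (ht : t ∈ Ico a b) (ht2 : γ t 2 = 0)
    (hopt : NotReachedBefore α (b - a) northPole (γ b)) : γ b 2 ≠ 0 := by
  obtain ⟨r, hr, hr2, hpos⟩ := exists_first_zero ht.1
    ((h.continuousOn_apply 2).mono (Icc_subset_Icc_right ht.2.le)) (by simp [ha, northPole]) ht2.le
  have hrb : r ∈ Ioo a b := ⟨hr.1, hr.2.trans_lt ht.2⟩
  have hpole : halfTurn northPole = northPole := by simp [halfTurn, northPole]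
  rcases apply_one_neg_or_eq_equatorPoint_zero_or_halfTurn (h.hsph r (Ioo_subset_Icc_self hrb)) hr2
    with hcase | hcase
  · exact h.apply_two_ne_zero_of_first_hit hs hsc ha hrb hr2 hpos hcase hopt
  · refine h.comp_halfTurn.apply_two_ne_zero_of_first_hit hs hsc (by rw [ha, hpole]) hrb hr2 hpos
      hcase fun T hreach ↦ hopt T ?_
    simpa only [halfTurn_halfTurn, hpole] using hreach.halfTurn

end AdmissiblePairS

lemma TimeOptimalS.notReachedBefore {α a b : ℝ} {γ : ℝ → Fin 3 → ℝ} {u : ℝ → ℝ}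
    (h : TimeOptimalS α a b γ u) : NotReachedBefore α (b - a) (γ a) (γ b) := by
  rintro T ⟨γ', u', hγ', h0, hT⟩
  simpa using h.2 0 T γ' u' hγ' h0 hT

end

/-- A time optimal trajectory of `(Σ)_S` starting at the north pole meets the equator
at most once. -/
theorem equator_at_most_once (α a b : ℝ) (γ : ℝ → Fin 3 → ℝ) (u : ℝ → ℝ)
    (hα : α ∈ Set.Ioo 0 (π / 4)) (hopt : TimeOptimalS α a b γ u)
    (h0 : γ a = ![0, 0, 1]) :
    Set.Subsingleton {t ∈ Set.Icc a b | γ t 2 = 0} := by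
  have hs : 0 < sin α := sin_pos_of_pos_of_lt_pi hα.1 (by linarith [hα.2, pi_pos])
  have hsc : sin α < cos α := by
    rw [← sin_pi_div_two_sub]
    exact sin_lt_sin_of_lt_of_le_pi_div_two (by linarith [hα.1, pi_pos]) (by linarith [hα.1])
      (by linarith [hα.2])
  rintro t ⟨ht, ht2⟩ t' ⟨ht', ht2'⟩
  by_contra hne
  wlog hlt : t < t' generalizing t t'
  · exact this ht' ht2' ht ht2 (Ne.symm hne) ((not_lt.1 hlt).lt_of_ne (Ne.symm hne))
  have hopt' := hopt.1.notReachedBefore hopt.notReachedBefore ht'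
  rw [sub_sub_sub_cancel_left, h0] at hopt'
  exact (hopt.1.mono le_rfl ht'.1 ht'.2).apply_two_ne_zero hs hsc h0 ⟨ht.1, hlt⟩ ht2 hopt' ht2'
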